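/- arXiv:0805.0349 — 2 statements merged into one kernel-verified Lean document; each statement's English description precedes it below -/
import Mathlib

section
/- Let D ⊆ ℝ^ℓ be a bounded basic open semialgebraic set defined by integer-coefficient polynomial inequalities, contained in [0,r]^ℓ for a positive rational r. Then the Riemann-sum volume sequence n ↦ vol(V_n) is an elementary map ℕ → ℚ: there exist elementary functions a, b : ℕ → ℕ with vol(V_n) = a(n)/(b(n)+1) for all n ≥ 1. -/
/-- The class of elementary functions `ℕ^n → ℕ`: the smallest class containing the
zero function, successor, projections, addition, multiplication and truncated
subtraction, and closed under composition, bounded summation and bounded product. -/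
inductive Elem : ∀ {n : ℕ}, ((Fin n → ℕ) → ℕ) → Prop
  | zero {n : ℕ} : Elem (fun _ : Fin n → ℕ => 0)
  | succ : Elem (fun x : Fin 1 → ℕ => x 0 + 1)
  | proj {n : ℕ} (i : Fin n) : Elem (fun x : Fin n → ℕ => x i)
  | add : Elem (fun x : Fin 2 → ℕ => x 0 + x 1)
  | mul : Elem (fun x : Fin 2 → ℕ => x 0 * x 1)
  | tsub : Elem (fun x : Fin 2 → ℕ => x 0 - x 1)
  | comp {m n : ℕ} {f : (Fin m → ℕ) → ℕ} {g : Fin m → (Fin n → ℕ) → ℕ} :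
      Elem f → (∀ i, Elem (g i)) → Elem (fun x => f (fun i => g i x))
  | bsum {n : ℕ} {f : (Fin (n + 1) → ℕ) → ℕ} : Elem f →
      Elem (fun x : Fin (n + 1) → ℕ =>
        ∑ t ∈ Finset.range (x 0 + 1), f (Fin.cons t (fun i => x i.succ)))
  | bprod {n : ℕ} {f : (Fin (n + 1) → ℕ) → ℕ} : Elem f →
      Elem (fun x : Fin (n + 1) → ℕ =>
        ∏ t ∈ Finset.range (x 0 + 1), f (Fin.cons t (fun i => x i.succ)))

/-- A one-variable function `ℕ → ℕ` is elementary. -/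
def Elem1 (f : ℕ → ℕ) : Prop :=
  Elem (fun x : Fin 1 → ℕ => f (x 0))

/-- A (nonnegative) real number is elementary if it is approximated, with an
elementary modulus, by an elementary rational Cauchy sequence. -/
def ElemReal (α : ℝ) : Prop :=
  ∃ a b c : ℕ → ℕ, Elem1 a ∧ Elem1 b ∧ Elem1 c ∧
    ∀ k : ℕ, 1 ≤ k → ∀ x : ℕ, c k ≤ x →
      |(a x : ℝ) / ((b x : ℝ) + 1) - α| < 1 / (k : ℝ)

/-- The small cube `C_n(k) = Π_{i} [kᵢ·r/n, (kᵢ+1)·r/n] ⊆ ℝ^ℓ`. -/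
def smallCube (ℓ : ℕ) (r : ℚ) (n : ℕ) (k : Fin ℓ → ℕ) : Set (Fin ℓ → ℝ) :=
  Set.univ.pi fun i => Set.Icc ((k i : ℝ) * r / n) (((k i : ℝ) + 1) * r / n)

/-- `V_n`: the union of the small cubes `C_n(k)`, `k ∈ {0,…,n−1}^ℓ`, contained
in `D`. -/
def riemannUnion (ℓ : ℕ) (r : ℚ) (D : Set (Fin ℓ → ℝ)) (n : ℕ) :
    Set (Fin ℓ → ℝ) :=
  ⋃ k ∈ {k : Fin ℓ → ℕ | (∀ i, k i < n) ∧ smallCube ℓ r n k ⊆ D},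
    smallCube ℓ r n k

/-! A small cube lies in `D` iff each of the polynomials defining `D` is positive on it. If an
integer polynomial `G` is positive on a box whose endpoints are rationals of height at most `N`,
then `G ≥ N ^ (-E)` there, with `E` depending only on `G`. Since `G` is Lipschitz on the box with
constant polynomial in `N`, positivity on the box can be tested on a grid of mesh polynomial in
`1 / N`, which is an elementary bounded quantifier.

If the lower bound failed for every `E`, an ultraproduct of counterexamples would be a hyperreal
box with endpoints in a field `F₀` generated by hyperintegers bounded by powers of `ν`, containing
a point `t` with `0 < G t < ν ^ (-E)` for all `E`. The elements bounded by powers of `ν` form a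
convex valuation ring `O ⊇ F₀` in which `G t` is infinitesimal. Convexity and the intermediate
value property make `O` Henselian, so it has a coefficient field `F ⊇ F₀`. Replace `t` by the point
`s` with coordinates in `F` and the same residues: since `F` has no nonzero infinitesimals, `s` is
still in the box and `G s = 0`, whereas `G` is positive on the box. -/

section ConvexValuation

open Polynomial IsLocalRing

/-- The intermediate value property for polynomials over an ordered field, which is one of the
characterizations of real closed fields. -/
def PolynomialIVT (R : Type*) [Field R] [LinearOrder R] : Prop :=
  ∀ (p : R[X]) (a b : R), a ≤ b → p.eval a ≤ 0 → 0 ≤ p.eval b → ∃ c ∈ Set.Icc a b, p.eval c = 0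

variable {R : Type*} [Field R] [LinearOrder R] [IsStrictOrderedRing R] {O : ValuationSubring R}

theorem mem_of_abs_le_abs (hO : (O : Set R).OrdConnected) {x y : R} (hxy : |x| ≤ |y|)
    (hy : y ∈ O) : x ∈ O := by
  have habs : |y| ∈ O := by
    rcases abs_choice y with h | h <;> rw [h]
    exacts [hy, neg_mem hy]
  exact hO.out (neg_mem habs) habs (abs_le.mp hxy)

theorem valuation_le_of_abs_le_abs (hO : (O : Set R).OrdConnected) {x y : R} (hxy : |x| ≤ |y|) :
    O.valuation x ≤ O.valuation y := by
  rcases eq_or_ne y 0 with rfl | hy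
  · simp_all
  · have hmem : x / y ∈ O := by
      refine mem_of_abs_le_abs hO ?_ O.one_mem
      rwa [abs_div, abs_one, div_le_one (abs_pos.mpr hy)]
    exact (O.valuation_le_iff x y).mpr ⟨⟨x / y, hmem⟩, div_mul_cancel₀ x hy⟩

theorem abs_lt_one_of_valuation_lt_one (hO : (O : Set R).OrdConnected) {x : R}
    (hx : O.valuation x < 1) : |x| < 1 := by
  contrapose! hx
  simpa using valuation_le_of_abs_le_abs hO (x := 1) (by simpa using hx)

theorem valuation_mul_lt_one {K : Type*} [Field K] {O : ValuationSubring K} {k e : K} (hk : k ∈ O)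
    (he : O.valuation e < 1) : O.valuation (k * e) < 1 := by
  rw [mul_comm, map_mul]
  exact mul_lt_one_of_lt_of_le he ((O.valuation_le_one_iff k).mpr hk)

theorem abs_mul_sq_le_half_abs (hO : (O : Set R).OrdConnected) {k e : R} (hk : k ∈ O)
    (he : O.valuation e < 1) : |k * e ^ 2| ≤ |e| / 2 := by
  have hsmall : |2 * k * e| < 1 := abs_lt_one_of_valuation_lt_one hO <|
    valuation_mul_lt_one (O.mul_mem _ _ (ofNat_mem O 2) hk) he
  calc |k * e ^ 2| = |2 * k * e| * (|e| / 2) := by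
        rw [← abs_two (α := R), ← abs_div, ← abs_mul, abs_two]; ring_nf
    _ ≤ 1 * (|e| / 2) := by gcongr
    _ = |e| / 2 := one_mul _

theorem exists_root_of_eval_eq_add_mul_sq (hR : PolynomialIVT R) (hO : (O : Set R).OrdConnected)
    (p : R[X]) {t w : R} (hw : O.valuation w < 1)
    (hp : ∀ e ∈ O, ∃ k ∈ O, p.eval (t + e) = w + e + k * e ^ 2) :
    ∃ s, O.valuation (s - t) < 1 ∧ p.eval s = 0 := by
  set e := 2 * |w| with he
  have he0 : 0 ≤ e := by positivity
  have hve : O.valuation e < 1 :=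
    (valuation_le_of_abs_le_abs hO (by simp [he, abs_mul])).trans_lt
      (valuation_mul_lt_one (ofNat_mem O 2) hw)
  have heO : e ∈ O := O.mem_of_valuation_le_one _ hve.le
  obtain ⟨k, hk, hpk⟩ := hp e heO
  obtain ⟨l, hl, hpl⟩ := hp (-e) (neg_mem heO)
  have hke := (abs_le.mp (abs_mul_sq_le_half_abs hO hk hve)).1
  have hle := (abs_le.mp (abs_mul_sq_le_half_abs hO hl hve)).2
  rw [abs_of_nonneg he0] at hke hle
  have hw_lower := neg_abs_le w
  have hw_upper := le_abs_self w
  obtain ⟨s, ⟨hts, hst⟩, hs⟩ := hR p (t + -e) (t + e) (by linarith)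
    (by rw [hpl, neg_sq]; linarith) (by rw [hpk]; linarith)
  refine ⟨s, (valuation_le_of_abs_le_abs hO ?_).trans_lt hve, hs⟩
  rw [abs_of_nonneg he0, abs_le]
  constructor <;> linarith

theorem henselianLocalRing_of_polynomialIVT (hR : PolynomialIVT R)
    (hO : (O : Set R).OrdConnected) : HenselianLocalRing O where
  is_henselian f _ t hft hf't := by
    obtain ⟨d, hd⟩ := hf't
    set g : O[X] := f * C (↑d⁻¹ : O) with hg
    have hgt : O.valuation (g.eval t : O) < 1 :=
      (O.valuation_lt_one_iff _).mp <| by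
        rw [hg, eval_mul, eval_C]
        exact Ideal.mul_mem_right _ _ hft
    obtain ⟨s, hst, hs⟩ := exists_root_of_eval_eq_add_mul_sq hR hO (g.map O.subtype)
      (t := t) hgt fun e he ↦ by
        obtain ⟨k, hk⟩ := g.binomExpansion t ⟨e, he⟩
        have hg't : g.derivative.eval t = 1 := by simp [hg, ← hd]
        rw [hg't, one_mul] at hk
        refine ⟨k, k.2, ?_⟩
        have := congrArg O.subtype hk
        rw [← eval_map_apply] at this
        simpa using this
    have hsO : s ∈ O := by
      simpa using O.add_mem _ _ (O.mem_of_valuation_le_one _ hst.le) t.2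
    refine ⟨⟨s, hsO⟩, ?_, (O.valuation_lt_one_iff _).mpr hst⟩
    have hgs : g.eval ⟨s, hsO⟩ = 0 := by
      apply O.subtype_injective
      rw [← eval_map_apply, map_zero]
      exact hs
    simpa [hg] using hgs

end ConvexValuation

section CoefficientField

open Polynomial IsLocalRing
open scoped IntermediateField

/-- A coefficient field of a valuation ring `O ⊆ K`: a subfield of `K` contained in `O` that maps
onto (hence isomorphically to) the residue field of `O`. -/
structure IsCoefficientField {K : Type*} [Field K] (O : ValuationSubring K) (F : Subfield K) :
    Prop where
  le : F.toSubring ≤ O.toSubring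
  exists_residue_eq : ∀ t : O, ∃ s : O, (s : K) ∈ F ∧ residue O s = residue O t

theorem exists_residue_eq_aeval_minpoly_eq_zero (F : Type*) {A : Type*} [Field F] [PerfectField F]
    [CommRing A] [HenselianLocalRing A] [Algebra F A] (t : ResidueField A) :
    ∃ s : A, residue A s = t ∧ aeval s (minpoly F t) = 0 := by
  obtain ⟨t', rfl⟩ := residue_surjective t
  by_cases ht : IsIntegral F (residue A t')
  · have hresidue (p : F[X]) :
        residue A ((p.map (algebraMap F A)).eval t') = aeval (residue A t') p := by
      rw [eval_map_algebraMap]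
      exact (aeval_algebraMap_apply (ResidueField A) t' p).symm
    have hderiv : aeval (residue A t') (minpoly F (residue A t')).derivative ≠ 0 :=
      (PerfectField.separable_of_irreducible (minpoly.irreducible ht)).aeval_derivative_ne_zero
        (minpoly.aeval F (residue A t'))
    obtain ⟨s, hs, hst⟩ := HenselianLocalRing.is_henselian _ ((minpoly.monic ht).map _) t'
      (by rw [← residue_eq_zero_iff, hresidue, minpoly.aeval])
      (by rwa [← residue_ne_zero_iff_isUnit, derivative_map, hresidue])
    refine ⟨s, ?_, by rwa [← eval_map_algebraMap]⟩
    rwa [← sub_eq_zero, ← map_sub, residue_eq_zero_iff]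
  · exact ⟨t', rfl, by rw [minpoly.eq_zero ht, map_zero]⟩

variable {K : Type*} [Field K] {O : ValuationSubring K} {F : Subfield K}

theorem eq_zero_of_mem_of_valuation_lt_one (hF : F.toSubring ≤ O.toSubring) {x : K} (hx : x ∈ F)
    (hvx : O.valuation x < 1) : x = 0 := by
  by_contra h0
  have hinv := valuation_mul_lt_one (hF (F.inv_mem hx)) hvx
  rw [inv_mul_cancel₀ h0, map_one] at hinv
  exact hinv.false

theorem mem_of_mem_adjoin_simple {F : Type*} [Field F] [Algebra F O] [Algebra F K]
    [IsScalarTower F O K] {s : O}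
    (hs : ∀ p : F[X], aeval (residue O s) p = 0 → aeval s p = 0) {x : K}
    (hx : x ∈ F⟮(s : K)⟯) : x ∈ O := by
  obtain ⟨p, q, rfl⟩ := (IntermediateField.mem_adjoin_simple_iff F x).mp hx
  have hcoe (p : F[X]) : aeval (s : K) p = (aeval s p : O) := aeval_algebraMap_apply K s p
  have hresidue : aeval (residue O s) q = residue O (aeval s q) :=
    aeval_algebraMap_apply (ResidueField O) s q
  rw [hcoe, hcoe]
  by_cases hq : aeval (residue O s) q = 0
  · simp [hs q hq, O.zero_mem]
  · obtain ⟨u, hu⟩ := (residue_ne_zero_iff_isUnit _).mp (hresidue ▸ hq)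
    have hinv : (((u⁻¹ : Oˣ) : O) : K) = ((u : O) : K)⁻¹ :=
      map_units_inv O.subtype u
    rw [← hu, div_eq_mul_inv, ← hinv]
    exact (aeval s p * ↑u⁻¹).2

theorem exists_subfield_ge_residue_eq [CharZero K] [HenselianLocalRing O]
    (hF : F.toSubring ≤ O.toSubring) (t : O) :
    ∃ E : Subfield K, F ≤ E ∧ E.toSubring ≤ O.toSubring ∧
      ∃ s : O, (s : K) ∈ E ∧ residue O s = residue O t := by
  let _ : Algebra F O := (Subring.inclusion hF).toAlgebra
  have : IsScalarTower F O K := .of_algebraMap_eq fun _ ↦ rfl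
  obtain ⟨s, hst, hs⟩ := exists_residue_eq_aeval_minpoly_eq_zero F (residue O t)
  refine ⟨F⟮(s : K)⟯.toSubfield, fun x hx ↦ F⟮(s : K)⟯.algebraMap_mem ⟨x, hx⟩,
    fun x hx ↦ mem_of_mem_adjoin_simple (fun p hp ↦ ?_) hx,
    s, IntermediateField.mem_adjoin_simple_self F (s : K), hst⟩
  obtain ⟨q, rfl⟩ := minpoly.dvd F _ (hst ▸ hp)
  rw [map_mul, hs, zero_mul]

theorem exists_isCoefficientField_ge [CharZero K] [HenselianLocalRing O]
    (hF : F.toSubring ≤ O.toSubring) : ∃ E, F ≤ E ∧ IsCoefficientField O E := by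
  obtain ⟨M, hFM, hM⟩ := zorn_le_nonempty₀ {E : Subfield K | E.toSubring ≤ O.toSubring}
    (fun c hc hchain E hE ↦ ⟨sSup c, fun x hx ↦ by
      obtain ⟨E', hE', hxE'⟩ :=
        (Subfield.mem_sSup_of_directedOn ⟨E, hE⟩ hchain.directedOn).mp hx
      exact hc hE' hxE', fun _ ↦ le_sSup⟩) F hF
  refine ⟨M, hFM, hM.prop, fun t ↦ ?_⟩
  obtain ⟨E, hME, hE, s, hs, hst⟩ := exists_subfield_ge_residue_eq hM.prop t
  exact ⟨s, hM.le_of_ge hE hME hs, hst⟩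

end CoefficientField

section ApproximateZeros

open IsLocalRing MvPolynomial

variable {R : Type*} [Field R] [LinearOrder R] [IsStrictOrderedRing R] {O : ValuationSubring R}
  {F : Subfield R}

theorem le_of_le_of_valuation_sub_lt_one (hO : (O : Set R).OrdConnected)
    (hF : F.toSubring ≤ O.toSubring) {a s t : R} (ha : a ∈ F) (hs : s ∈ F) (hat : a ≤ t)
    (hst : O.valuation (s - t) < 1) : a ≤ s := by
  by_contra! hsa
  refine (sub_pos.mpr hsa).ne' (eq_zero_of_mem_of_valuation_lt_one hF (F.sub_mem ha hs)
    ((valuation_le_of_abs_le_abs hO ?_).trans_lt hst))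
  rw [abs_of_pos (sub_pos.mpr hsa), abs_sub_comm]
  exact (sub_le_sub_right hat s).trans (le_abs_self _)

theorem ge_of_ge_of_valuation_sub_lt_one (hO : (O : Set R).OrdConnected)
    (hF : F.toSubring ≤ O.toSubring) {a s t : R} (ha : a ∈ F) (hs : s ∈ F) (hta : t ≤ a)
    (hst : O.valuation (s - t) < 1) : s ≤ a := by
  refine neg_le_neg_iff.mp (le_of_le_of_valuation_sub_lt_one hO hF (F.neg_mem ha) (F.neg_mem hs)
    (neg_le_neg hta) ?_)
  rwa [← neg_sub', Valuation.map_neg]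

theorem valuation_aeval_lt_one_of_residue_eq {K : Type*} [Field K] {O : ValuationSubring K}
    {σ : Type*} (G : MvPolynomial σ ℤ) {s t : σ → O}
    (hst : ∀ i, residue O (s i) = residue O (t i))
    (ht : O.valuation (aeval (fun i ↦ (t i : K)) G) < 1) :
    O.valuation (aeval (fun i ↦ (s i : K)) G) < 1 := by
  have hcoe (u : σ → O) : aeval (fun i ↦ (u i : K)) G = (aeval u G : O) :=
    aeval_algebraMap_apply K u G
  have hresidue (u : σ → O) : aeval (fun i ↦ residue O (u i)) G = residue O (aeval u G) :=
    aeval_algebraMap_apply (ResidueField O) u G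
  rw [hcoe, ← ValuationSubring.valuation_lt_one_iff, ← residue_eq_zero_iff, ← hresidue] at ht ⊢
  simpa only [hst] using ht

theorem exists_mem_Icc_aeval_eq_zero (hR : PolynomialIVT R) (hO : (O : Set R).OrdConnected)
    (hF : F.toSubring ≤ O.toSubring) {σ : Type*} (G : MvPolynomial σ ℤ) {lo hi t : σ → R}
    (hlo : ∀ i, lo i ∈ F) (hhi : ∀ i, hi i ∈ F) (ht : t ∈ Set.Icc lo hi)
    (hGt : O.valuation (aeval t G) < 1) : ∃ s ∈ Set.Icc lo hi, aeval s G = 0 := by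
  have := henselianLocalRing_of_polynomialIVT hR hO
  obtain ⟨E, hFE, hE⟩ := exists_isCoefficientField_ge hF
  have htO (i : σ) : t i ∈ O := hO.out (hF (hlo i)) (hF (hhi i)) ⟨ht.1 i, ht.2 i⟩
  choose s hsE hst using fun i ↦ hE.exists_residue_eq ⟨t i, htO i⟩
  have hclose (i : σ) : O.valuation (s i - t i) < 1 := by
    have hsub := hst i
    rw [← sub_eq_zero, ← map_sub, residue_eq_zero_iff] at hsub
    exact (O.valuation_lt_one_iff _).mp hsub
  have hmem : aeval (fun i ↦ (s i : R)) G ∈ E := by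
    have := aeval_algebraMap_apply R (fun i ↦ (⟨s i, hsE i⟩ : E)) G
    exact this ▸ Subtype.property _
  have hsmall : O.valuation (aeval (fun i ↦ (s i : R)) G) < 1 :=
    valuation_aeval_lt_one_of_residue_eq G hst hGt
  refine ⟨fun i ↦ s i, ⟨fun i ↦ ?_, fun i ↦ ?_⟩, eq_zero_of_mem_of_valuation_lt_one hE.le hmem
    hsmall⟩
  · exact le_of_le_of_valuation_sub_lt_one hO hE.le (hFE (hlo i)) (hsE i) (ht.1 i) (hclose i)
  · exact ge_of_ge_of_valuation_sub_lt_one hO hE.le (hFE (hhi i)) (hsE i) (ht.2 i) (hclose i)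

theorem subfieldClosure_le_of_one_le_abs (hO : (O : Set R).OrdConnected) {A : Subring R}
    (hAO : A ≤ O.toSubring) (hA : ∀ z ∈ A, z ≠ 0 → 1 ≤ |z|) :
    (Subfield.closure (A : Set R)).toSubring ≤ O.toSubring := by
  intro x hx
  obtain ⟨y, hy, z, hz, rfl⟩ := Subfield.mem_closure_iff.mp hx
  rw [Subring.closure_eq] at hy hz
  have hz_inv : z⁻¹ ∈ O := by
    rcases eq_or_ne z 0 with rfl | hz0
    · simp [O.zero_mem]
    · refine mem_of_abs_le_abs hO ?_ O.one_mem
      rw [abs_inv, abs_one]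
      exact inv_le_one_of_one_le₀ (hA z hz hz0)
  rw [div_eq_mul_inv]
  exact O.mul_mem _ _ (hAO hy) hz_inv

theorem pow_add_pow_le_pow {R : Type*} [CommRing R] [LinearOrder R]
    [IsStrictOrderedRing R] {N : R} (hN : 2 ≤ N) (m n : ℕ) : N ^ m + N ^ n ≤ N ^ (max m n + 1) := by
  have hN1 : 1 ≤ N := one_le_two.trans hN
  calc N ^ m + N ^ n ≤ N ^ max m n + N ^ max m n := by
        gcongr <;> simp
    _ = N ^ max m n * 2 := (mul_two _).symm
    _ ≤ N ^ (max m n + 1) := by rw [pow_succ]; gcongr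

/-- The valuation ring of the elements of `R` that are bounded by a power of `N`. -/
def powBounded (N : R) (hN : 2 ≤ N) : ValuationSubring R where
  carrier := {a | ∃ E : ℕ, |a| ≤ N ^ E}
  zero_mem' := ⟨0, by simp⟩
  one_mem' := ⟨0, by simp⟩
  neg_mem' := by simp
  add_mem' := by
    rintro a b ⟨E, ha⟩ ⟨E', hb⟩
    exact ⟨max E E' + 1, (abs_add_le a b).trans <|
      (add_le_add ha hb).trans (pow_add_pow_le_pow hN E E')⟩
  mul_mem' := by
    rintro a b ⟨E, ha⟩ ⟨E', hb⟩
    refine ⟨E + E', ?_⟩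
    rw [abs_mul, pow_add]
    gcongr
  mem_or_inv_mem' a := by
    rcases le_total |a| 1 with h | h
    · exact .inl ⟨0, by simpa⟩
    · exact .inr ⟨0, by simpa [abs_inv] using inv_le_one_of_one_le₀ h⟩

variable {N : R} {hN : 2 ≤ N}

theorem ordConnected_powBounded : (powBounded N hN : Set R).OrdConnected where
  out' := by
    rintro x ⟨E, hx⟩ y ⟨E', hy⟩ a ⟨hxa, hay⟩
    have hN1 : 1 ≤ N := one_le_two.trans hN
    refine ⟨max E E', abs_le.mpr ⟨?_, ?_⟩⟩
    · exact (neg_le_neg (pow_le_pow_right₀ hN1 (le_max_left E E'))).trans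
        ((abs_le.mp hx).1.trans hxa)
    · exact hay.trans ((abs_le.mp hy).2.trans (pow_le_pow_right₀ hN1 (le_max_right E E')))

theorem valuation_powBounded_lt_one_of_forall {a : R} (ha : ∀ E : ℕ, |a| * N ^ E < 1) :
    (powBounded N hN).valuation a < 1 := by
  by_contra! h
  have ha0 : 0 < |a| := abs_pos.mpr fun h0 ↦ by simp [h0] at h
  have hinv : a⁻¹ ∈ powBounded N hN := by
    rw [← ValuationSubring.valuation_le_one_iff, map_inv₀]
    exact inv_le_one_of_one_le₀ h
  obtain ⟨E, hE⟩ := hinv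
  rw [abs_inv, inv_le_iff_one_le_mul₀' ha0] at hE
  exact (hE.trans_lt (ha E)).false

end ApproximateZeros

section PositivityGap

open Filter MvPolynomial

/-- The ring homomorphism sending a sequence of reals to the hyperreal it represents. -/
noncomputable def germHom : (ℕ → ℝ) →+* ℝ* :=
  Germ.coeRingHom (hyperfilter ℕ : Filter ℕ)

theorem germHom_surjective : Function.Surjective germHom :=
  Hyperreal.ofSeq_surjective

theorem germHom_le_germHom {f g : ℕ → ℝ} :
    germHom f ≤ germHom g ↔ ∀ᶠ j in hyperfilter ℕ, f j ≤ g j :=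
  Hyperreal.ofSeq_le_ofSeq

theorem germHom_lt_germHom {f g : ℕ → ℝ} :
    germHom f < germHom g ↔ ∀ᶠ j in hyperfilter ℕ, f j < g j :=
  Hyperreal.ofSeq_lt_ofSeq

theorem germHom_eq_germHom {f g : ℕ → ℝ} :
    germHom f = germHom g ↔ ∀ᶠ j in hyperfilter ℕ, f j = g j :=
  Germ.coe_eq

theorem germHom_div (f g : ℕ → ℝ) : germHom (f / g) = germHom f / germHom g :=
  Germ.coe_div f g

theorem abs_germHom (f : ℕ → ℝ) : |germHom f| = germHom |f| :=
  Germ.abs_def _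

theorem aeval_germHom {σ : Type*} (G : MvPolynomial σ ℤ) (f : σ → ℕ → ℝ) :
    aeval (fun i ↦ germHom (f i)) G = germHom fun j ↦ aeval (fun i ↦ f i j) G :=
  (comp_aeval_apply f germHom.toIntAlgHom G).symm.trans <| congrArg germHom <| funext fun j ↦
    comp_aeval_apply f (Pi.evalRingHom (fun _ ↦ ℝ) j).toIntAlgHom G

theorem polynomialIVT_hyperreal : PolynomialIVT ℝ* := by
  intro p a b hab hpa hpb
  obtain ⟨P, rfl⟩ := Polynomial.map_surjective germHom germHom_surjective p
  obtain ⟨f, rfl⟩ := germHom_surjective a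
  obtain ⟨g, rfl⟩ := germHom_surjective b
  set p : ℕ → Polynomial ℝ := fun j ↦ P.map (Pi.evalRingHom _ j) with hp
  have heval (h : ℕ → ℝ) : (P.map germHom).eval (germHom h) = germHom fun j ↦ (p j).eval (h j) := by
    rw [Polynomial.eval_map_apply]
    congr 1
    funext j
    exact (Polynomial.eval_map_apply (Pi.evalRingHom (fun _ ↦ ℝ) j) h).symm
  rw [heval, ← map_zero germHom, germHom_le_germHom] at hpa hpb
  have hroot : ∀ᶠ j in hyperfilter ℕ, ∃ c ∈ Set.Icc (f j) (g j), (p j).eval c = 0 := by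
    filter_upwards [germHom_le_germHom.mp hab, hpa, hpb] with j hj hfj hgj
    exact intermediate_value_Icc hj (p j).continuousOn ⟨hfj, hgj⟩
  obtain ⟨c, hc⟩ := hroot.choice
  refine ⟨germHom c, ⟨germHom_le_germHom.mpr (hc.mono fun j h ↦ h.1.1),
    germHom_le_germHom.mpr (hc.mono fun j h ↦ h.1.2)⟩, ?_⟩
  rw [heval, ← map_zero germHom, germHom_eq_germHom]
  exact hc.mono fun j h ↦ h.2

/-- The ring of hyperintegers, i.e. the hyperreals represented by sequences of integers. -/
noncomputable def hyperint : Subring ℝ* :=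
  (germHom.comp ((Int.castRingHom ℝ).compLeft ℕ)).range

theorem one_le_abs_of_mem_hyperint {z : ℝ*} (hz : z ∈ hyperint) (h0 : z ≠ 0) : 1 ≤ |z| := by
  obtain ⟨m, rfl⟩ := hz
  rw [RingHom.comp_apply] at h0 ⊢
  rw [ne_eq, ← map_zero germHom, germHom_eq_germHom, ← Ultrafilter.eventually_not] at h0
  rw [abs_germHom, ← map_one germHom, germHom_le_germHom]
  filter_upwards [h0] with j hj
  have hmj : m j ≠ 0 := by simpa using hj
  simpa using mod_cast Int.one_le_abs hmj

/-- `x` is a quotient of two integers of absolute value at most `N`. A zero denominator is allowed,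
as it only contributes `x = 0`. -/
def RatHeightLE (N : ℕ) (x : ℝ) : Prop :=
  ∃ p q : ℤ, |p| ≤ N ∧ |q| ≤ N ∧ x = p / q

theorem germHom_mem_closure_of_ratHeightLE {N : ℕ → ℕ} {hN : 2 ≤ germHom fun j ↦ N j} {x : ℕ → ℝ}
    (hx : ∀ j, RatHeightLE (N j) (x j)) :
    germHom x ∈ Subfield.closure
      ((hyperint ⊓ (powBounded _ hN).toSubring : Subring ℝ*) : Set ℝ*) := by
  choose p q hp hq hxpq using hx
  have hmem (m : ℕ → ℤ) (hm : ∀ j, |m j| ≤ N j) :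
      germHom (fun j ↦ m j) ∈ hyperint ⊓ (powBounded _ hN).toSubring := by
    refine ⟨⟨m, rfl⟩, 1, ?_⟩
    rw [abs_germHom, pow_one, germHom_le_germHom]
    exact .of_forall fun j ↦ by simpa using mod_cast hm j
  rw [show x = (fun j ↦ (p j : ℝ)) / fun j ↦ (q j : ℝ) from funext hxpq, germHom_div]
  exact div_mem (Subfield.subset_closure (hmem p hp)) (Subfield.subset_closure (hmem q hq))

theorem exists_aeval_eq_zero_of_germHom {σ : Type*} [Finite σ] (G : MvPolynomial σ ℤ)
    {a b : ℕ → σ → ℝ} {s : σ → ℝ*}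
    (hs : s ∈ Set.Icc (fun i ↦ germHom fun j ↦ a j i) (fun i ↦ germHom fun j ↦ b j i))
    (hGs : aeval s G = 0) : ∃ j, ∃ y ∈ Set.Icc (a j) (b j), aeval y G = 0 := by
  choose y hy using fun i ↦ germHom_surjective (s i)
  obtain rfl : (fun i ↦ germHom (y i)) = s := funext hy
  rw [aeval_germHom, ← map_zero germHom, germHom_eq_germHom] at hGs
  have hys : ∀ᶠ j in hyperfilter ℕ, (fun i ↦ y i j) ∈ Set.Icc (a j) (b j) :=
    (eventually_all.mpr fun i ↦ germHom_le_germHom.mp (hs.1 i)).and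
      (eventually_all.mpr fun i ↦ germHom_le_germHom.mp (hs.2 i))
  obtain ⟨j, hGj, hj⟩ := (hGs.and hys).exists
  exact ⟨j, _, hj, hGj⟩

theorem exists_one_le_aeval_mul_pow_of_forall_pos {σ : Type*} [Finite σ] (G : MvPolynomial σ ℤ) :
    ∃ E : ℕ, ∀ N : ℕ, 2 ≤ N → ∀ a b : σ → ℝ,
      (∀ i, RatHeightLE N (a i)) → (∀ i, RatHeightLE N (b i)) →
      (∀ x ∈ Set.Icc a b, 0 < aeval x G) →
      ∀ x ∈ Set.Icc a b, 1 ≤ aeval x G * (N : ℝ) ^ E := by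
  by_contra! hgap
  choose N hN2 a b ha hb hpos x hx hsmall using hgap
  have hν2 : 2 ≤ germHom fun j ↦ N j := by
    rw [← map_ofNat germHom 2, germHom_le_germHom]
    exact .of_forall fun j ↦ by simpa using mod_cast hN2 j
  have hO := ordConnected_powBounded (hN := hν2)
  have hinf : (powBounded _ hν2).valuation (aeval (fun i ↦ germHom fun j ↦ x j i) G) < 1 := by
    refine valuation_powBounded_lt_one_of_forall fun E ↦ ?_
    rw [aeval_germHom, abs_germHom, ← map_pow, ← map_mul, ← map_one germHom, germHom_lt_germHom]
    filter_upwards [Nat.hyperfilter_le_atTop (eventually_ge_atTop E)] with j hj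
    refine lt_of_le_of_lt ?_ (hsmall j)
    have hN1 : (1 : ℝ) ≤ N j := mod_cast one_le_two.trans (hN2 j)
    simp only [Pi.mul_apply, Pi.abs_apply, Pi.pow_apply, abs_of_pos (hpos j _ (hx j))]
    gcongr
    exact (hpos j _ (hx j)).le
  obtain ⟨s, hs, hGs⟩ := exists_mem_Icc_aeval_eq_zero polynomialIVT_hyperreal hO
    (subfieldClosure_le_of_one_le_abs hO inf_le_right
      fun z hz ↦ one_le_abs_of_mem_hyperint hz.1) G
    (fun i ↦ germHom_mem_closure_of_ratHeightLE fun j ↦ ha j i)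
    (fun i ↦ germHom_mem_closure_of_ratHeightLE fun j ↦ hb j i)
    ⟨fun i ↦ germHom_le_germHom.mpr (.of_forall fun j ↦ (hx j).1 i),
      fun i ↦ germHom_le_germHom.mpr (.of_forall fun j ↦ (hx j).2 i)⟩ hinf
  obtain ⟨j, y, hy, hGy⟩ := exists_aeval_eq_zero_of_germHom G hs hGs
  exact (hpos j y hy).ne' hGy

end PositivityGap

section GridTest

open MvPolynomial

variable {R : Type*} [CommRing R] [LinearOrder R] [IsStrictOrderedRing R] {σ : Type*}

theorem exists_abs_aeval_le_pow (G : MvPolynomial σ ℤ) :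
    ∃ d : ℕ, ∀ N : R, 2 ≤ N → ∀ x : σ → R, (∀ i, |x i| ≤ N) → |aeval x G| ≤ N ^ d := by
  induction G using MvPolynomial.induction_on with
  | C m =>
    refine ⟨m.natAbs, fun N hN x _ ↦ ?_⟩
    calc |aeval x (C m)| = ((m.natAbs : ℕ) : R) := by simp [Nat.cast_natAbs]
      _ ≤ 2 ^ m.natAbs := mod_cast Nat.lt_two_pow_self.le
      _ ≤ N ^ m.natAbs := by gcongr
  | add P Q hP hQ =>
    obtain ⟨c, hc⟩ := hP
    obtain ⟨d, hd⟩ := hQ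
    refine ⟨max c d + 1, fun N hN x hx ↦ ?_⟩
    rw [map_add]
    exact (abs_add_le _ _).trans <|
      (add_le_add (hc N hN x hx) (hd N hN x hx)).trans (pow_add_pow_le_pow hN c d)
  | mul_X P i hP =>
    obtain ⟨d, hd⟩ := hP
    refine ⟨d + 1, fun N hN x hx ↦ ?_⟩
    rw [map_mul, aeval_X, abs_mul, pow_succ]
    have := hd N hN x hx
    gcongr
    exact hx i

theorem exists_abs_aeval_sub_aeval_le_pow_mul (G : MvPolynomial σ ℤ) :
    ∃ d : ℕ, ∀ N : R, 2 ≤ N → ∀ x y : σ → R, (∀ i, |x i| ≤ N) → (∀ i, |y i| ≤ N) →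
      ∀ ε, 0 ≤ ε → (∀ i, |x i - y i| ≤ ε) → |aeval x G - aeval y G| ≤ N ^ d * ε := by
  induction G using MvPolynomial.induction_on with
  | C m => exact ⟨0, fun _ _ _ _ _ _ _ hε _ ↦ by simpa using hε⟩
  | add P Q hP hQ =>
    obtain ⟨c, hc⟩ := hP
    obtain ⟨d, hd⟩ := hQ
    refine ⟨max c d + 1, fun N hN x y hx hy ε hε hxy ↦ ?_⟩
    calc |aeval x (P + Q) - aeval y (P + Q)|
        = |(aeval x P - aeval y P) + (aeval x Q - aeval y Q)| := by
          rw [map_add, map_add, add_sub_add_comm]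
      _ ≤ N ^ c * ε + N ^ d * ε := (abs_add_le _ _).trans <|
          add_le_add (hc N hN x y hx hy ε hε hxy) (hd N hN x y hx hy ε hε hxy)
      _ ≤ N ^ (max c d + 1) * ε := by
          rw [← add_mul]
          gcongr
          exact pow_add_pow_le_pow hN c d
  | mul_X P i hP =>
    obtain ⟨c, hc⟩ := exists_abs_aeval_le_pow (R := R) P
    obtain ⟨d, hd⟩ := hP
    refine ⟨max c (d + 1) + 1, fun N hN x y hx hy ε hε hxy ↦ ?_⟩
    have hPx := hc N hN x hx
    have hPxy := hd N hN x y hx hy ε hε hxy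
    have : 0 ≤ N := zero_le_two.trans hN
    calc |aeval x (P * X i) - aeval y (P * X i)|
        = |aeval x P * (x i - y i) + (aeval x P - aeval y P) * y i| := by
          simp only [map_mul, aeval_X]; ring_nf
      _ ≤ N ^ c * ε + N ^ d * ε * N := by
          refine (abs_add_le _ _).trans ?_
          rw [abs_mul, abs_mul]
          gcongr
          exacts [hxy i, hy i]
      _ = (N ^ c + N ^ (d + 1)) * ε := by ring
      _ ≤ N ^ (max c (d + 1) + 1) * ε := by
          gcongr
          exact pow_add_pow_le_pow hN c (d + 1)

theorem RatHeightLE.abs_le {N : ℕ} {x : ℝ} (hx : RatHeightLE N x) : |x| ≤ N := by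
  obtain ⟨p, q, hp, -, rfl⟩ := hx
  have hpN : |(p : ℝ)| ≤ N := mod_cast hp
  rw [abs_div]
  rcases eq_or_ne q 0 with rfl | hq
  · simp
  · exact (div_le_self (abs_nonneg _) (mod_cast Int.one_le_abs hq)).trans hpN

/-- The point with multi-index `g` of the grid that divides each edge of the box `[a, b]` into `M`
equal parts. -/
noncomputable def gridPoint (a b : σ → ℝ) (M : ℕ) (g : σ → ℕ) : σ → ℝ :=
  fun i ↦ a i + (b i - a i) * (g i / M)

theorem gridPoint_mem_Icc {a b : σ → ℝ} (hab : a ≤ b) {M : ℕ} {g : σ → ℕ} (hg : ∀ i, g i ≤ M) :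
    gridPoint a b M g ∈ Set.Icc a b := by
  have hfrac (i : σ) : (g i : ℝ) / M ≤ 1 := div_le_one_of_le₀ (mod_cast hg i) (by positivity)
  have hba (i : σ) : 0 ≤ b i - a i := sub_nonneg.mpr (hab i)
  refine ⟨fun i ↦ le_add_of_nonneg_right (mul_nonneg (hba i) (by positivity)), fun i ↦ ?_⟩
  have := mul_le_of_le_one_right (hba i) (hfrac i)
  rw [gridPoint]
  linarith

theorem exists_abs_add_mul_div_sub_le {a b x : ℝ} (hx : x ∈ Set.Icc a b) {M : ℕ} (hM : 0 < M) :
    ∃ g ≤ M, |a + (b - a) * (g / M) - x| ≤ (b - a) / M := by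
  have hxa : 0 ≤ x - a := sub_nonneg.mpr hx.1
  have hxba : x - a ≤ b - a := sub_le_sub_right hx.2 a
  have hba : 0 ≤ b - a := hxa.trans hxba
  set u := (x - a) / (b - a) * M with hu
  have hu0 : 0 ≤ u := by positivity
  have huM : u ≤ M := mul_le_of_le_one_left (by positivity) (div_le_one_of_le₀ hxba hba)
  have hxu : a + (b - a) * (u / M) = x := by
    rw [hu, mul_div_cancel_right₀ _ (by positivity), mul_comm, div_mul_cancel_of_imp,
      add_sub_cancel]
    exact fun h ↦ le_antisymm (h ▸ hxba) hxa
  refine ⟨⌊u⌋₊, Nat.floor_le_of_le huM, ?_⟩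
  have hfloor : |(⌊u⌋₊ : ℝ) - u| ≤ 1 := by
    rw [abs_le]
    constructor <;> linarith [Nat.floor_le hu0, Nat.lt_floor_add_one u]
  calc |a + (b - a) * (⌊u⌋₊ / M) - x|
      = |(b - a) / M * (⌊u⌋₊ - u)| := congrArg abs (by linear_combination hxu)
    _ = (b - a) / M * |⌊u⌋₊ - u| := by rw [abs_mul, abs_of_nonneg (by positivity)]
    _ ≤ (b - a) / M := mul_le_of_le_one_right (by positivity) hfloor

theorem exists_abs_gridPoint_sub_le {a b x : σ → ℝ} (hx : x ∈ Set.Icc a b) {M : ℕ} (hM : 0 < M) :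
    ∃ g : σ → ℕ, (∀ i, g i ≤ M) ∧ ∀ i, |gridPoint a b M g i - x i| ≤ (b i - a i) / M := by
  choose g hgM hg using fun i ↦ exists_abs_add_mul_div_sub_le ⟨hx.1 i, hx.2 i⟩ hM
  exact ⟨g, hgM, hg⟩

theorem exists_forall_mem_Icc_aeval_pos_iff [Finite σ] (G : MvPolynomial σ ℤ) :
    ∃ E e : ℕ, ∀ N : ℕ, 2 ≤ N → ∀ a b : σ → ℝ,
      (∀ i, RatHeightLE N (a i)) → (∀ i, RatHeightLE N (b i)) → a ≤ b →
      ((∀ x ∈ Set.Icc a b, 0 < aeval x G) ↔ ∀ g : σ → ℕ, (∀ i, g i ≤ N ^ e) →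
        1 ≤ aeval (gridPoint a b (N ^ e) g) G * (N : ℝ) ^ E) := by
  obtain ⟨E, hE⟩ := exists_one_le_aeval_mul_pow_of_forall_pos G
  obtain ⟨d, hd⟩ := exists_abs_aeval_sub_aeval_le_pow_mul (R := ℝ) G
  refine ⟨E, E + d + 3, fun N hN a b ha hb hab ↦
    ⟨fun hpos g hg ↦ hE N hN a b ha hb hpos _ (gridPoint_mem_Icc hab hg), fun htest x hx ↦ ?_⟩⟩
  have hN2 : (2 : ℝ) ≤ N := mod_cast hN
  have hbound {y : σ → ℝ} (hy : y ∈ Set.Icc a b) (i : σ) : |y i| ≤ N :=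
    abs_le.mpr ⟨(abs_le.mp (ha i).abs_le).1.trans (hy.1 i),
      (hy.2 i).trans (abs_le.mp (hb i).abs_le).2⟩
  obtain ⟨g, hg, hgx⟩ := exists_abs_gridPoint_sub_le hx (M := N ^ (E + d + 3)) (by positivity)
  have hmesh (i : σ) : (b i - a i) / (N ^ (E + d + 3) : ℕ) ≤ ((N : ℝ) ^ (E + d + 1))⁻¹ := by
    have hwidth : b i - a i ≤ N ^ 2 := by
      nlinarith [(abs_le.mp (ha i).abs_le).1, (abs_le.mp (hb i).abs_le).2]
    rw [inv_eq_one_div, div_le_div_iff₀ (by positivity) (by positivity), one_mul, Nat.cast_pow]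
    calc (b i - a i) * N ^ (E + d + 1) ≤ (N : ℝ) ^ 2 * N ^ (E + d + 1) := by gcongr
      _ = N ^ (E + d + 3) := by ring
  have hclose := hd N hN2 _ x (hbound (gridPoint_mem_Icc hab hg)) (hbound hx) _ (by positivity)
    fun i ↦ (hgx i).trans (hmesh i)
  have herror : (N : ℝ) ^ d * ((N : ℝ) ^ (E + d + 1))⁻¹ * N ^ E < 1 := by
    rw [show (N : ℝ) ^ d * ((N : ℝ) ^ (E + d + 1))⁻¹ * N ^ E = (N : ℝ)⁻¹ by field_simp; ring]
    exact inv_lt_one_of_one_lt₀ (one_lt_two.trans_le hN2)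
  refine pos_of_mul_pos_left (b := (N : ℝ) ^ E) ?_ (by positivity)
  nlinarith [htest g hg, mul_le_mul_of_nonneg_right ((le_abs_self _).trans hclose)
    (show 0 ≤ (N : ℝ) ^ E by positivity)]

end GridTest

section ElementaryFunctions

variable {N ℓ : ℕ} {f g b : (Fin N → ℕ) → ℕ}

theorem Elem.comp₂ {h : (Fin 2 → ℕ) → ℕ} (hh : Elem h) (hf : Elem f) (hg : Elem g) :
    Elem fun z ↦ h ![f z, g z] := by
  have hcomp := hh.comp (g := ![f, g]) (Fin.forall_fin_two.mpr ⟨hf, hg⟩)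
  convert! hcomp using 3 with z
  ext i
  fin_cases i <;> rfl

theorem Elem.fun_add (hf : Elem f) (hg : Elem g) : Elem fun z ↦ f z + g z :=
  Elem.add.comp₂ hf hg

theorem Elem.fun_mul (hf : Elem f) (hg : Elem g) : Elem fun z ↦ f z * g z :=
  Elem.mul.comp₂ hf hg

theorem Elem.fun_tsub (hf : Elem f) (hg : Elem g) : Elem fun z ↦ f z - g z :=
  Elem.tsub.comp₂ hf hg

theorem Elem.const : ∀ c : ℕ, Elem fun _ : Fin N → ℕ ↦ c
  | 0 => .zero
  | c + 1 => .comp .succ fun _ ↦ Elem.const c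

theorem Elem.fun_pow_const (hf : Elem f) : ∀ c : ℕ, Elem fun z ↦ f z ^ c
  | 0 => by simpa using Elem.const 1
  | c + 1 => by simpa only [pow_succ] using (hf.fun_pow_const c).fun_mul hf

theorem Elem.finset_sum {ι : Type*} {s : Finset ι} {f : ι → (Fin N → ℕ) → ℕ}
    (hf : ∀ i ∈ s, Elem (f i)) : Elem fun z ↦ ∑ i ∈ s, f i z := by
  rw [← Finset.sum_fn]
  exact Finset.sum_induction f Elem (fun _ _ ↦ Elem.fun_add) .zero hf

theorem Elem.rename {M : ℕ} (hf : Elem f) (e : Fin N → Fin M) : Elem fun z ↦ f (z ∘ e) :=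
  hf.comp fun i ↦ .proj (e i)

theorem Elem.sum_range {f : (Fin (N + 1) → ℕ) → ℕ} (hf : Elem f) (hb : Elem b) :
    Elem fun z ↦ ∑ t ∈ Finset.range (b z), f (Fin.cons t z) := by
  have hcons : ∀ i, Elem fun z : Fin N → ℕ ↦ (Fin.cons (b z) z : Fin (N + 1) → ℕ) i :=
    Fin.cases hb .proj
  have hsum := (hf.bsum.comp hcons).fun_tsub (hf.comp hcons)
  simpa [Finset.sum_range_succ] using hsum

theorem sum_piFinset_const_succ {α M : Type*} [AddCommMonoid M] (s : Finset α)
    (f : (Fin (ℓ + 1) → α) → M) :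
    ∑ k ∈ Fintype.piFinset fun _ ↦ s, f k =
      ∑ t ∈ s, ∑ k ∈ Fintype.piFinset fun _ ↦ s, f (Fin.cons t k) := by
  rw [← Finset.sum_product']
  exact (Finset.sum_equiv (Fin.consEquiv fun _ ↦ α) (by simp [Fin.forall_fin_succ])
    (by simp [Fin.consEquiv])).symm

theorem Elem.sum_piFinset_range {f : (Fin (N + ℓ) → ℕ) → ℕ} (hf : Elem f) (hb : Elem b) :
    Elem fun z ↦ ∑ k ∈ Fintype.piFinset fun _ ↦ Finset.range (b z), f (Fin.append z k) := by
  induction ℓ generalizing N with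
  | zero => simpa [Subsingleton.elim _ Fin.elim0, Fin.append_elim0] using hf
  | succ ℓ ih =>
    let e : Fin (N + (ℓ + 1)) → Fin (N + 1 + ℓ) :=
      Fin.append (fun i ↦ Fin.castAdd ℓ i.succ) (Fin.cons (Fin.castAdd ℓ 0) (Fin.natAdd (N + 1)))
    have happend (z : Fin N → ℕ) (t : ℕ) (k : Fin ℓ → ℕ) :
        Fin.append (Fin.cons t z : Fin (N + 1) → ℕ) k ∘ e = Fin.append z (Fin.cons t k) :=
      funext <| Fin.addCases (by simp [e]) (Fin.cases (by simp [e]) (by simp [e]))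
    simpa [sum_piFinset_const_succ, happend] using
      (ih (hf.rename e) (hb.rename Fin.succ)).sum_range hb

/-- Elementary predicates: those that hold exactly at the zeros of an elementary function. -/
def ElemPred (P : (Fin N → ℕ) → Prop) : Prop :=
  ∃ χ, Elem χ ∧ ∀ z, χ z = 0 ↔ P z

theorem ElemPred.forall_fintype {ι : Type*} [Finite ι] {P : ι → (Fin N → ℕ) → Prop}
    (hP : ∀ i, ElemPred (P i)) : ElemPred fun z ↦ ∀ i, P i z := by
  have := Fintype.ofFinite ι
  choose χ hχ hχP using hP
  exact ⟨_, .finset_sum (s := .univ) fun i _ ↦ hχ i, fun z ↦ by simp [hχP]⟩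

theorem ElemPred.forall_lt {P : (Fin N → ℕ) → (Fin ℓ → ℕ) → Prop}
    (hP : ElemPred fun y ↦ P (y ∘ Fin.castAdd ℓ) (y ∘ Fin.natAdd N)) (hb : Elem b) :
    ElemPred fun z ↦ ∀ k : Fin ℓ → ℕ, (∀ i, k i < b z) → P z k := by
  obtain ⟨χ, hχ, hχP⟩ := hP
  exact ⟨_, hχ.sum_piFinset_range hb, fun z ↦ by simp [hχP, Function.comp_def]⟩

open Classical in
theorem ElemPred.card_filter {P : (Fin N → ℕ) → (Fin ℓ → ℕ) → Prop}
    (hP : ElemPred fun y ↦ P (y ∘ Fin.castAdd ℓ) (y ∘ Fin.natAdd N)) (hb : Elem b) :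
    Elem fun z ↦
      ((Fintype.piFinset fun _ : Fin ℓ ↦ Finset.range (b z)).filter fun k ↦ P z k).card := by
  obtain ⟨χ, hχ, hχP⟩ := hP
  convert! ((Elem.const 1).fun_tsub hχ).sum_piFinset_range hb using 2 with z
  rw [Finset.card_filter]
  refine Finset.sum_congr rfl fun k _ ↦ ?_
  have hk : χ (Fin.append z k) = 0 ↔ P z k := by simp [hχP, Function.comp_def]
  rw [← hk]
  split_ifs <;> lia

end ElementaryFunctions

section ElementaryRationalMaps

open MvPolynomial

variable {N ℓ : ℕ} {f g : (Fin N → ℕ) → ℝ}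

/-- Elementary maps to `ℚ`, of either sign, regarded as real-valued functions: quotients
`(a - b) / (c + 1)` with `a`, `b`, `c` elementary. -/
def ElemRat (f : (Fin N → ℕ) → ℝ) : Prop :=
  ∃ a b c : (Fin N → ℕ) → ℕ, Elem a ∧ Elem b ∧ Elem c ∧
    ∀ z, f z = ((a z : ℝ) - b z) / (c z + 1)

theorem ElemRat.natCast {a : (Fin N → ℕ) → ℕ} (ha : Elem a) : ElemRat fun z ↦ (a z : ℝ) :=
  ⟨a, _, _, ha, .zero, .zero, fun z ↦ by simp⟩

theorem ElemRat.intCast (m : ℤ) : ElemRat fun _ : Fin N → ℕ ↦ (m : ℝ) :=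
  ⟨_, _, _, .const m.toNat, .const (-m).toNat, .zero, fun _ ↦ by
    have hm : (m.toNat : ℝ) - ((-m).toNat : ℝ) = m := mod_cast m.toNat_sub_toNat_neg
    simp [hm]⟩

theorem ElemRat.rename {M : ℕ} (hf : ElemRat f) (e : Fin N → Fin M) :
    ElemRat fun z ↦ f (z ∘ e) := by
  obtain ⟨a, b, c, ha, hb, hc, hfz⟩ := hf
  exact ⟨_, _, _, ha.rename e, hb.rename e, hc.rename e, fun z ↦ hfz _⟩

theorem ElemRat.neg (hf : ElemRat f) : ElemRat fun z ↦ -f z := by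
  obtain ⟨a, b, c, ha, hb, hc, hfz⟩ := hf
  exact ⟨b, a, c, hb, ha, hc, fun z ↦ by simp only [hfz, ← neg_div, neg_sub]⟩

theorem ElemRat.add (hf : ElemRat f) (hg : ElemRat g) : ElemRat fun z ↦ f z + g z := by
  obtain ⟨a, b, c, ha, hb, hc, hfz⟩ := hf
  obtain ⟨a', b', c', ha', hb', hc', hgz⟩ := hg
  have hc1 := hc.fun_add (.const 1)
  have hc1' := hc'.fun_add (.const 1)
  refine ⟨_, _, _, (ha.fun_mul hc1').fun_add (ha'.fun_mul hc1),
    (hb.fun_mul hc1').fun_add (hb'.fun_mul hc1),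
    ((hc.fun_mul hc').fun_add hc).fun_add hc', fun z ↦ ?_⟩
  have hden : (c z : ℝ) * c' z + c z + c' z + 1 = (c z + 1) * (c' z + 1) := by ring
  push_cast
  rw [hfz, hgz, hden]
  field_simp
  ring

theorem ElemRat.sub (hf : ElemRat f) (hg : ElemRat g) : ElemRat fun z ↦ f z - g z := by
  simpa only [sub_eq_add_neg] using hf.add hg.neg

theorem ElemRat.mul (hf : ElemRat f) (hg : ElemRat g) : ElemRat fun z ↦ f z * g z := by
  obtain ⟨a, b, c, ha, hb, hc, hfz⟩ := hf
  obtain ⟨a', b', c', ha', hb', hc', hgz⟩ := hg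
  refine ⟨_, _, _, (ha.fun_mul ha').fun_add (hb.fun_mul hb'),
    (ha.fun_mul hb').fun_add (hb.fun_mul ha'),
    ((hc.fun_mul hc').fun_add hc).fun_add hc', fun z ↦ ?_⟩
  have hden : (c z : ℝ) * c' z + c z + c' z + 1 = (c z + 1) * (c' z + 1) := by ring
  push_cast
  rw [hfz, hgz, hden]
  field_simp
  ring

theorem ElemRat.pow_const (hf : ElemRat f) : ∀ c : ℕ, ElemRat fun z ↦ f z ^ c
  | 0 => by simpa using ElemRat.intCast 1
  | c + 1 => by simpa only [pow_succ] using (hf.pow_const c).mul hf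

theorem ElemRat.inv_natCast {a : (Fin N → ℕ) → ℕ} (ha : Elem a) :
    ElemRat fun z ↦ (a z : ℝ)⁻¹ := by
  -- The numerator `1 ∸ (1 ∸ a)` vanishes for `a = 0`, in accordance with `0⁻¹ = 0`.
  refine ⟨_, _, _, (Elem.const 1).fun_tsub ((Elem.const 1).fun_tsub ha), .zero,
    ha.fun_tsub (.const 1), fun z ↦ ?_⟩
  rcases h : a z <;> simp [h]

theorem ElemRat.ratCast (q : ℚ) : ElemRat fun _ : Fin N → ℕ ↦ (q : ℝ) := by
  simpa only [Rat.cast_def, div_eq_mul_inv] using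
    (ElemRat.intCast q.num).mul (.inv_natCast (.const q.den))

theorem ElemRat.mvPolynomial_aeval {σ : Type*} (G : MvPolynomial σ ℤ) {x : (Fin N → ℕ) → σ → ℝ}
    (hx : ∀ i, ElemRat fun z ↦ x z i) : ElemRat fun z ↦ aeval (x z) G := by
  induction G using MvPolynomial.induction_on with
  | C m => simpa using ElemRat.intCast m
  | add P Q hP hQ => simpa only [map_add] using hP.add hQ
  | mul_X P i hP => simpa only [map_mul, aeval_X] using hP.mul (hx i)

theorem ElemRat.elemPred_le (hf : ElemRat f) (hg : ElemRat g) : ElemPred fun z ↦ f z ≤ g z := by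
  obtain ⟨a, b, c, ha, hb, -, hfz⟩ := hg.sub hf
  refine ⟨_, hb.fun_tsub ha, fun z ↦ ?_⟩
  beta_reduce at hfz ⊢
  rw [← sub_nonneg, hfz, le_div_iff₀ (by positivity), zero_mul, sub_nonneg, Nat.cast_le,
    tsub_eq_zero_iff_le]

theorem ElemRat.exists_eq_div_of_nonneg (hf : ElemRat f) (hf0 : ∀ z, 0 ≤ f z) :
    ∃ a b, Elem a ∧ Elem b ∧ ∀ z, f z = a z / (b z + 1) := by
  obtain ⟨a, b, c, ha, hb, hc, hfz⟩ := hf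
  refine ⟨_, c, ha.fun_tsub hb, hc, fun z ↦ ?_⟩
  have hba : b z ≤ a z := by
    have := hf0 z
    rwa [hfz, le_div_iff₀ (by positivity), zero_mul, sub_nonneg, Nat.cast_le] at this
  rw [hfz, Nat.cast_sub hba]

theorem RatHeightLE.mono {M N : ℕ} (hMN : M ≤ N) {x : ℝ} (hx : RatHeightLE M x) :
    RatHeightLE N x := by
  obtain ⟨p, q, hp, hq, rfl⟩ := hx
  exact ⟨p, q, hp.trans (mod_cast hMN), hq.trans (mod_cast hMN), rfl⟩

theorem ElemRat.exists_ratHeightLE (hf : ElemRat f) :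
    ∃ H, Elem H ∧ ∀ z, RatHeightLE (H z) (f z) := by
  obtain ⟨a, b, c, ha, hb, hc, hfz⟩ := hf
  refine ⟨_, ((ha.fun_add hb).fun_add hc).fun_add (.const 1), fun z ↦
    ⟨a z - b z, c z + 1, ?_, ?_, by simp [hfz]⟩⟩ <;> grind

theorem ElemRat.exists_forall_ratHeightLE {ι : Type*} [Finite ι] {f : ι → (Fin N → ℕ) → ℝ}
    (hf : ∀ i, ElemRat (f i)) : ∃ H, Elem H ∧ ∀ z i, RatHeightLE (H z) (f i z) := by
  have := Fintype.ofFinite ι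
  choose H hH hfH using fun i ↦ (hf i).exists_ratHeightLE
  exact ⟨_, .finset_sum (s := .univ) fun i _ ↦ hH i, fun z i ↦
    (hfH i z).mono (Finset.single_le_sum (fun _ _ ↦ Nat.zero_le _) (Finset.mem_univ i))⟩

theorem ElemRat.gridPoint_apply {a b : (Fin N → ℕ) → Fin ℓ → ℝ} {M : (Fin N → ℕ) → ℕ}
    {k : (Fin N → ℕ) → Fin ℓ → ℕ} (ha : ∀ i, ElemRat fun z ↦ a z i)
    (hb : ∀ i, ElemRat fun z ↦ b z i) (hM : Elem M) (hk : ∀ i, Elem fun z ↦ k z i) (i : Fin ℓ) :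
    ElemRat fun z ↦ gridPoint (a z) (b z) (M z) (k z) i := by
  simpa only [gridPoint, div_eq_mul_inv] using
    (ha i).add (((hb i).sub (ha i)).mul ((ElemRat.natCast (hk i)).mul (.inv_natCast hM)))

theorem ElemRat.elemPred_forall_mem_Icc_aeval_pos (G : MvPolynomial (Fin ℓ) ℤ)
    {a b : (Fin N → ℕ) → Fin ℓ → ℝ} (ha : ∀ i, ElemRat fun z ↦ a z i)
    (hb : ∀ i, ElemRat fun z ↦ b z i) (hab : ∀ z, a z ≤ b z) :
    ElemPred fun z ↦ ∀ x ∈ Set.Icc (a z) (b z), 0 < aeval x G := by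
  obtain ⟨E, e, hEe⟩ := exists_forall_mem_Icc_aeval_pos_iff G
  obtain ⟨H, hH, hH2, haH, hbH⟩ : ∃ H, Elem H ∧ (∀ z, 2 ≤ H z) ∧
      (∀ z i, RatHeightLE (H z) (a z i)) ∧ ∀ z i, RatHeightLE (H z) (b z i) := by
    obtain ⟨A, hA, haA⟩ := ElemRat.exists_forall_ratHeightLE ha
    obtain ⟨B, hB, hbB⟩ := ElemRat.exists_forall_ratHeightLE hb
    exact ⟨fun z ↦ 2 + A z + B z, ((Elem.const 2).fun_add hA).fun_add hB, fun z ↦ by lia,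
      fun z i ↦ (haA z i).mono (by lia), fun z i ↦ (hbB z i).mono (by lia)⟩
  have htest : ElemPred fun z ↦ ∀ g : Fin ℓ → ℕ, (∀ i, g i < H z ^ e + 1) →
      (1 : ℝ) ≤ aeval (gridPoint (a z) (b z) (H z ^ e) g) G * H z ^ E := by
    refine .forall_lt (P := fun z g ↦
      (1 : ℝ) ≤ aeval (gridPoint (a z) (b z) (H z ^ e) g) G * H z ^ E) ?_
      ((hH.fun_pow_const e).fun_add (.const 1))
    have hgrid := ElemRat.gridPoint_apply (fun i ↦ (ha i).rename (Fin.castAdd ℓ))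
      (fun i ↦ (hb i).rename (Fin.castAdd ℓ)) ((hH.rename (Fin.castAdd ℓ)).fun_pow_const e)
      (k := fun y ↦ y ∘ Fin.natAdd N) fun i ↦ .proj (Fin.natAdd N i)
    exact ElemRat.elemPred_le (by simpa using ElemRat.intCast 1) <|
      (ElemRat.mvPolynomial_aeval G hgrid).mul
        (.pow_const (.natCast (hH.rename (Fin.castAdd ℓ))) E)
  simpa only [Nat.lt_succ_iff, hEe _ (hH2 _) _ _ (haH _) (hbH _) (hab _)] using htest

end ElementaryRationalMaps

section Volume

open MeasureTheory MvPolynomial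

variable {ℓ : ℕ} {r : ℚ}

theorem smallCube_eq_Icc (r : ℚ) (n : ℕ) (k : Fin ℓ → ℕ) :
    smallCube ℓ r n k =
      Set.Icc (fun i ↦ (k i : ℝ) * r / n) (fun i ↦ ((k i : ℝ) + 1) * r / n) :=
  Set.pi_univ_Icc _ _

theorem volume_smallCube (r : ℚ) (n : ℕ) (k : Fin ℓ → ℕ) :
    volume (smallCube ℓ r n k) = ENNReal.ofReal ((r : ℝ) / n) ^ ℓ := by
  have hedge (i : Fin ℓ) : ((k i : ℝ) + 1) * r / n - (k i : ℝ) * r / n = (r : ℝ) / n := by ring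
  rw [smallCube_eq_Icc, Real.volume_Icc_pi]
  simp [hedge]

theorem aedisjoint_smallCube (hr : 0 ≤ r) (n : ℕ) {k k' : Fin ℓ → ℕ} (hkk' : k ≠ k') :
    AEDisjoint volume (smallCube ℓ r n k) (smallCube ℓ r n k') := by
  obtain ⟨i, hi⟩ := Function.ne_iff.mp hkk'
  wlog hlt : k i < k' i generalizing k k'
  · exact (this hkk'.symm hi.symm (hi.lt_or_gt.resolve_left hlt)).symm
  have hle : ((k i : ℝ) + 1) * r / n ≤ (k' i : ℝ) * r / n := by
    have : (0 : ℝ) ≤ r := mod_cast hr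
    gcongr
    exact_mod_cast hlt
  rw [AEDisjoint, smallCube_eq_Icc, smallCube_eq_Icc, Set.Icc_inter_Icc, Real.volume_Icc_pi]
  refine Finset.prod_eq_zero (Finset.mem_univ i) (ENNReal.ofReal_eq_zero.mpr (sub_nonpos.mpr ?_))
  exact inf_le_left.trans (hle.trans le_sup_right)

open Classical in
theorem volume_riemannUnion (hr : 0 ≤ r) (D : Set (Fin ℓ → ℝ)) (n : ℕ) :
    (volume (riemannUnion ℓ r D n)).toReal =
      (((Fintype.piFinset fun _ : Fin ℓ ↦ Finset.range n).filter
        fun k ↦ smallCube ℓ r n k ⊆ D).card : ℝ) * ((r : ℝ) / n) ^ ℓ := by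
  have hunion : riemannUnion ℓ r D n =
      ⋃ k ∈ (Fintype.piFinset fun _ : Fin ℓ ↦ Finset.range n).filter
        fun k ↦ smallCube ℓ r n k ⊆ D, smallCube ℓ r n k := by
    simp [riemannUnion]
  have hr' : (0 : ℝ) ≤ r := mod_cast hr
  rw [hunion, measure_biUnion_finset₀ (fun k _ k' _ ↦ aedisjoint_smallCube hr n)
    fun k _ ↦ smallCube_eq_Icc r n k ▸ measurableSet_Icc.nullMeasurableSet]
  simp [volume_smallCube, ENNReal.toReal_ofReal (div_nonneg hr' n.cast_nonneg)]

theorem elemPred_smallCube_subset (hr : 0 ≤ r) {ι : Type*} [Finite ι]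
    (G : ι → MvPolynomial (Fin ℓ) ℤ) {N : ℕ} {n : (Fin N → ℕ) → ℕ} {k : (Fin N → ℕ) → Fin ℓ → ℕ}
    (hn : Elem n) (hk : ∀ i, Elem fun z ↦ k z i) :
    ElemPred fun z ↦ smallCube ℓ r (n z) (k z) ⊆ {x | ∀ i, 0 < aeval x (G i)} := by
  have hcoord {m : (Fin N → ℕ) → ℝ} (hm : ElemRat m) : ElemRat fun z ↦ m z * r / n z := by
    simpa only [div_eq_mul_inv] using (hm.mul (.ratCast r)).mul (.inv_natCast hn)
  have hlower (i : Fin ℓ) : ElemRat fun z ↦ (k z i : ℝ) * r / n z := hcoord (.natCast (hk i))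
  have hupper (i : Fin ℓ) : ElemRat fun z ↦ ((k z i : ℝ) + 1) * r / n z :=
    hcoord (by simpa using (ElemRat.natCast (hk i)).add (.intCast 1))
  have : (0 : ℝ) ≤ r := mod_cast hr
  have hpos := ElemPred.forall_fintype fun i ↦
    ElemRat.elemPred_forall_mem_Icc_aeval_pos (G i) hlower hupper fun z j ↦ by gcongr; simp
  simpa only [smallCube_eq_Icc, Set.subset_def, Set.mem_ofPred_eq, forall_comm (α := ι)] using hpos

end Volume

theorem riemannUnion_volume_elementary_general {ℓ : ℕ} {r : ℚ} (hr : 0 ≤ r) {ι : Type*} [Finite ι]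
    (G : ι → MvPolynomial (Fin ℓ) ℤ) {D : Set (Fin ℓ → ℝ)}
    (hD : D = {x : Fin ℓ → ℝ | ∀ i, 0 < MvPolynomial.aeval x (G i)}) :
    ∃ a b : ℕ → ℕ, Elem1 a ∧ Elem1 b ∧
      ∀ n : ℕ, 1 ≤ n →
        (MeasureTheory.volume (riemannUnion ℓ r D n)).toReal = (a n : ℝ) / ((b n : ℝ) + 1) := by
  have hvol : ElemRat fun z : Fin 1 → ℕ ↦
      (MeasureTheory.volume (riemannUnion ℓ r D (z 0))).toReal := by
    have hcount := ElemRat.natCast <| ElemPred.card_filter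
      (P := fun z k ↦ smallCube ℓ r (z 0) k ⊆ {x | ∀ i, 0 < MvPolynomial.aeval x (G i)})
      (elemPred_smallCube_subset hr G (.proj (Fin.castAdd ℓ 0))
        fun i ↦ .proj (Fin.natAdd 1 i)) (.proj 0)
    have hedge : ElemRat fun z : Fin 1 → ℕ ↦ (r : ℝ) / z 0 := by
      simpa only [div_eq_mul_inv] using (ElemRat.ratCast r).mul (.inv_natCast (.proj 0))
    simpa [volume_riemannUnion hr, hD] using hcount.mul (hedge.pow_const ℓ)
  obtain ⟨a, b, ha, hb, hab⟩ := hvol.exists_eq_div_of_nonneg fun _ ↦ ENNReal.toReal_nonneg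
  have hElem1 {f : (Fin 1 → ℕ) → ℕ} (hf : Elem f) : Elem1 fun n ↦ f fun _ ↦ n :=
    hf.comp fun _ ↦ .proj 0
  exact ⟨_, _, hElem1 ha, hElem1 hb, fun n _ ↦ hab fun _ ↦ n⟩

/-- For a bounded basic open semialgebraic set
`D ⊆ [0,r]^ℓ` defined by integer-coefficient polynomials, the Riemann-sum
volume sequence `n ↦ vol(V_n)` is an elementary map `ℕ → ℚ`. -/
theorem riemannUnion_volume_elementary
    (ℓ q : ℕ) (r : ℚ) (hr : 0 < r)
    (G : Fin q → MvPolynomial (Fin ℓ) ℤ)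
    (D : Set (Fin ℓ → ℝ))
    (hD : D = {x : Fin ℓ → ℝ | ∀ i, 0 < MvPolynomial.aeval x (G i)})
    (hsub : D ⊆ Set.univ.pi fun _ => Set.Icc (0 : ℝ) (r : ℝ)) :
    ∃ a b : ℕ → ℕ, Elem1 a ∧ Elem1 b ∧
      ∀ n : ℕ, 1 ≤ n →
        (MeasureTheory.volume (riemannUnion ℓ r D n)).toReal
          = (a n : ℝ) / ((b n : ℝ) + 1) :=
  riemannUnion_volume_elementary_general hr.le G hD
end

section
/- Let D ⊆ ℝ^ℓ be a bounded basic open semialgebraic set defined by integer-coefficient polynomials, contained in [0,r]^ℓ for a positive rational r. Then there exists a constant L > 0, depending only on D, such that for all positive integers k and n with 4·r·L·√ℓ·k < n, one has |vol(D) − vol(V_n)| < 1/k. -/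
/-!
Write `ε = r / n`. A grid cube of side `ε` that meets `D` without being contained in `D` meets the
frontier of `D`, hence contains a zero of a fixed nonzero polynomial `P` (the product of the `Gᵢ`).
It suffices to show that only `O(n ^ (ℓ - 1))` grid cubes contain a zero of `P`: each has volume
`ε ^ ℓ`, so their total volume is `O(1 / n)`.

The count is by induction on the degree of `P`. Cubes containing a zero of some nonzero partial
derivative are counted by the induction hypothesis. On any other cube the partial derivatives have
constant signs `s ∈ {1, -1}^ι`, so `P` is monotone in the direction `s`, and its minimum and
maximum on the cube are attained at the two ends of the diagonal in that direction. A zero of `P`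
in the cube therefore yields a zero on the diagonal, and `P` does not vanish identically there.
The grid splits into `O(n ^ (ℓ - 1))` diagonals in the direction `s`, and on each of them the
restriction of `P` is a nonzero univariate polynomial, whose at most `deg P` roots each lie in at
most two cubes.
-/

open MvPolynomial MeasureTheory

section Polynomials

variable {σ R : Type*} [CommSemiring R]

theorem totalDegree_pderiv_le (i : σ) (P : MvPolynomial σ R) :
    (pderiv i P).totalDegree ≤ P.totalDegree - 1 := by
  refine Finset.sup_le fun m hm ↦ ?_
  rw [mem_support_iff, coeff_pderiv] at hm
  have hmP : m + Finsupp.single i 1 ∈ P.support := mem_support_iff.2 (left_ne_zero_of_mul hm)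
  have hdeg := le_totalDegree hmP
  rw [Finsupp.sum_add_index' (fun _ ↦ rfl) (fun _ _ _ ↦ rfl), Finsupp.sum_single_index rfl] at hdeg
  exact Nat.le_sub_one_of_lt hdeg

theorem derivative_aeval_eq_sum_pderiv [Fintype σ] (f : σ → Polynomial R) (P : MvPolynomial σ R) :
    Polynomial.derivative (aeval f P)
      = ∑ i, aeval f (pderiv i P) * Polynomial.derivative (f i) := by
  classical
  induction P using MvPolynomial.induction_on with
  | C c => simp
  | add p q hp hq => simp only [map_add, hp, hq, add_mul, Finset.sum_add_distrib]
  | mul_X p j hp =>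
    have hX (i : σ) : aeval f (pderiv i (X j : MvPolynomial σ R)) = if i = j then 1 else 0 := by
      rw [pderiv_X, Pi.single_apply]
      split_ifs <;> simp_all
    simp only [pderiv_mul, map_add, map_mul, aeval_X, Polynomial.derivative_mul, hp, hX, add_mul,
      Finset.sum_add_distrib, Finset.sum_mul, mul_ite, ite_mul, mul_one, mul_zero, zero_mul,
      Finset.sum_ite_eq', Finset.mem_univ, if_true]
    simp only [mul_right_comm]

/-- The restriction `t ↦ P (a + t v)` of `P` to a parametrised line, as a univariate polynomial. -/
noncomputable def lineRestriction (P : MvPolynomial σ R) (a v : σ → R) : Polynomial R :=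
  aeval (fun i ↦ Polynomial.C (v i) * Polynomial.X + Polynomial.C (a i)) P

theorem eval_lineRestriction (P : MvPolynomial σ R) (a v : σ → R) (t : R) :
    (lineRestriction P a v).eval t = eval (a + t • v) P := by
  induction P using MvPolynomial.induction_on with
  | C c => simp [lineRestriction]
  | add p q hp hq => simpa [lineRestriction] using congrArg₂ (· + ·) hp hq
  | mul_X p i hp =>
    have hi : v i * t + a i = (a + t • v) i := by simp [mul_comm, add_comm]
    simpa [lineRestriction, hi] using congrArg (· * (a + t • v) i) hp

theorem natDegree_lineRestriction_le (P : MvPolynomial σ R) (a v : σ → R) :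
    (lineRestriction P a v).natDegree ≤ P.totalDegree := by
  simpa [lineRestriction] using
    aeval_natDegree_le (n := 1) P le_rfl _ fun _ ↦ Polynomial.natDegree_linear_le

theorem derivative_lineRestriction [Fintype σ] (P : MvPolynomial σ R) (a v : σ → R) :
    Polynomial.derivative (lineRestriction P a v)
      = ∑ i, lineRestriction (pderiv i P) a v * Polynomial.C (v i) := by
  simp [lineRestriction, derivative_aeval_eq_sum_pderiv]

theorem card_le_two_mul_natDegree_of_roots_near {Q : Polynomial ℝ} (hQ : Q ≠ 0) {ε : ℝ}
    (hε : 0 < ε) (U : Finset ℤ) (hU : ∀ u ∈ U, ∃ t, |t - ε * u| ≤ ε / 2 ∧ Q.eval t = 0) :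
    U.card ≤ 2 * Q.natDegree := by
  classical
  choose! root hnear hroot using hU
  have hfiber : ∀ t ∈ U.image root, (U.filter (root · = t)).card ≤ 2 := by
    intro t _
    have hsub : U.filter (root · = t) ⊆ Finset.Icc ⌈t / ε - 1 / 2⌉ ⌊t / ε + 1 / 2⌋ := by
      intro u hu
      obtain ⟨huU, rfl⟩ := Finset.mem_filter.1 hu
      obtain ⟨hl, hr⟩ := abs_le.1 (hnear u huU)
      rw [Finset.mem_Icc, Int.ceil_le, Int.le_floor, sub_le_iff_le_add, div_le_iff₀ hε,
        ← sub_le_iff_le_add, le_div_iff₀ hε]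
      constructor <;> linarith
    have hlen : ⌊t / ε + 1 / 2⌋ ≤ ⌈t / ε - 1 / 2⌉ + 1 := by
      have := (Int.floor_le (t / ε + 1 / 2)).trans
        (by linarith [Int.le_ceil (t / ε - 1 / 2)] : _ ≤ (⌈t / ε - 1 / 2⌉ : ℝ) + 1)
      exact_mod_cast this
    refine (Finset.card_le_card hsub).trans ?_
    rw [Int.card_Icc]
    omega
  have hroots : U.image root ⊆ Q.roots.toFinset := by
    intro t ht
    obtain ⟨u, hu, rfl⟩ := Finset.mem_image.1 ht
    simpa [hQ] using hroot u hu
  calc U.card ≤ 2 * (U.image root).card := Finset.card_le_mul_card_image U 2 hfiber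
    _ ≤ 2 * Q.natDegree := by
      gcongr
      exact (Finset.card_le_card hroots).trans
        ((Multiset.toFinset_card_le _).trans (Polynomial.card_roots' Q))

end Polynomials

section SignedPartials

/-- The vector in `{1, -1}^ι` with signs `s`, over an arbitrary ring so that it can serve as a
direction both in the grid `ℤ^ι` and in `ℝ^ι`. -/
def signVector {ι : Type*} (R : Type*) [Ring R] (s : ι → ℤˣ) : ι → R := fun i ↦ ((s i : ℤ) : R)

theorem signVector_mul_self {ι R : Type*} [Ring R] (s : ι → ℤˣ) (i : ι) :
    signVector R s i * signVector R s i = 1 := by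
  rcases Int.units_eq_one_or (s i) with h | h <;> simp [signVector, h]

theorem abs_signVector {ι : Type*} (s : ι → ℤˣ) (i : ι) : |signVector ℝ s i| = 1 := by
  rcases Int.units_eq_one_or (s i) with h | h <;> simp [signVector, h]

/-- On `S`, each partial derivative `∂P/∂xᵢ` has the sign `s i` in the weak sense. -/
def HasPartialSignsOn {ι : Type*} (P : MvPolynomial ι ℝ) (s : ι → ℤˣ) (S : Set (ι → ℝ)) : Prop :=
  ∀ i, ∀ z ∈ S, 0 ≤ signVector ℝ s i * eval z (pderiv i P)

theorem exists_sign_of_forall_eval_ne_zero {ι : Type*} {P : MvPolynomial ι ℝ} {S : Set (ι → ℝ)}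
    (hS : IsPreconnected S) (hP : ∀ z ∈ S, eval z P ≠ 0) :
    ∃ s : ℤˣ, ∀ z ∈ S, 0 ≤ ((s : ℤ) : ℝ) * eval z P := by
  by_contra! h
  obtain ⟨x, hx, hx_neg⟩ := h 1
  obtain ⟨y, hy, hy_pos⟩ := h (-1)
  simp only [Units.val_one, Int.cast_one, one_mul, Units.val_neg, Int.cast_neg, neg_mul,
    neg_neg_iff_pos] at hx_neg hy_pos
  obtain ⟨z, hz, hz0⟩ := hS.intermediate_value hx hy (continuous_eval P).continuousOn
    ⟨hx_neg.le, hy_pos.le⟩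
  exact hP z hz hz0

theorem exists_hasPartialSignsOn {ι : Type*} {P : MvPolynomial ι ℝ} {S : Set (ι → ℝ)}
    (hS : IsPreconnected S) (hP : ∀ i, pderiv i P ≠ 0 → ∀ z ∈ S, eval z (pderiv i P) ≠ 0) :
    ∃ s, HasPartialSignsOn P s S := by
  have hsign (i : ι) : ∃ s : ℤˣ, ∀ z ∈ S, 0 ≤ ((s : ℤ) : ℝ) * eval z (pderiv i P) := by
    by_cases hi : pderiv i P = 0
    · exact ⟨1, by simp [hi]⟩
    · exact exists_sign_of_forall_eval_ne_zero hS (hP i hi)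
  choose s hs using hsign
  exact ⟨s, hs⟩

theorem eval_le_eval_of_sum_pderiv_nonneg {ι : Type*} [Fintype ι] {P : MvPolynomial ι ℝ}
    {x y : ι → ℝ}
    (h : ∀ z ∈ segment ℝ x y, 0 ≤ ∑ i, eval z (pderiv i P) * (y i - x i)) :
    eval x P ≤ eval y P := by
  have hmono : MonotoneOn (lineRestriction P x (y - x)).eval (Set.Icc 0 1) := by
    refine monotoneOn_of_deriv_nonneg (convex_Icc 0 1) (Polynomial.continuous _).continuousOn
      (Polynomial.differentiable _).differentiableOn fun t ht ↦ ?_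
    have hz : x + t • (y - x) ∈ segment ℝ x y := by
      rw [segment_eq_image']
      exact Set.mem_image_of_mem _ (interior_subset ht)
    rw [Polynomial.deriv, derivative_lineRestriction, Polynomial.eval_finsetSum]
    simpa [eval_lineRestriction] using h _ hz
  have := hmono (Set.left_mem_Icc.2 zero_le_one) (Set.right_mem_Icc.2 zero_le_one) zero_le_one
  simpa [eval_lineRestriction] using this

theorem HasPartialSignsOn.eval_le_eval {ι : Type*} [Finite ι] {P : MvPolynomial ι ℝ}
    {s : ι → ℤˣ} {S : Set (ι → ℝ)} (h : HasPartialSignsOn P s S) (hS : Convex ℝ S) {x y : ι → ℝ}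
    (hx : x ∈ S) (hy : y ∈ S) (hxy : ∀ i, 0 ≤ signVector ℝ s i * (y i - x i)) :
    eval x P ≤ eval y P := by
  cases nonempty_fintype ι
  refine eval_le_eval_of_sum_pderiv_nonneg fun z hz ↦ Finset.sum_nonneg fun i _ ↦ ?_
  calc 0 ≤ signVector ℝ s i * eval z (pderiv i P) * (signVector ℝ s i * (y i - x i)) :=
        mul_nonneg (h i z (hS.segment_subset hx hy hz)) (hxy i)
    _ = signVector ℝ s i * signVector ℝ s i * (eval z (pderiv i P) * (y i - x i)) := by ring
    _ = eval z (pderiv i P) * (y i - x i) := by rw [signVector_mul_self, one_mul]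

variable {ι : Type*} [Fintype ι] {P : MvPolynomial ι ℝ}

theorem add_smul_signVector_mem_closedBall (c : ι → ℝ) (s : ι → ℤˣ) {t δ : ℝ} (ht : |t| ≤ δ) :
    c + t • signVector ℝ s ∈ Metric.closedBall c δ := by
  have hδ : 0 ≤ δ := (abs_nonneg t).trans ht
  refine mem_closedBall_iff_norm.2 ((pi_norm_le_iff_of_nonneg hδ).2 fun i ↦ ?_)
  simpa [abs_mul, abs_signVector] using ht

theorem HasPartialSignsOn.eval_mem_Icc {s : ι → ℤˣ} {c x : ι → ℝ} {δ : ℝ}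
    (h : HasPartialSignsOn P s (Metric.closedBall c δ)) (hx : x ∈ Metric.closedBall c δ) :
    eval x P ∈ Set.Icc ((lineRestriction P c (signVector ℝ s)).eval (-δ))
      ((lineRestriction P c (signVector ℝ s)).eval δ) := by
  have hδ : 0 ≤ δ := dist_nonneg.trans hx
  have hcoord (i : ι) : |signVector ℝ s i * (x i - c i)| ≤ δ := by
    rw [abs_mul, abs_signVector, one_mul, ← Real.dist_eq]
    exact (dist_le_pi_dist x c i).trans hx
  have hball := convex_closedBall c δ
  simp only [eval_lineRestriction]
  constructor
  · refine h.eval_le_eval hball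
      (add_smul_signVector_mem_closedBall c s (by rw [abs_neg, abs_of_nonneg hδ])) hx fun i ↦ ?_
    simp only [Pi.add_apply, Pi.smul_apply, smul_eq_mul]
    linear_combination (abs_le.1 (hcoord i)).1 - δ * signVector_mul_self (R := ℝ) s i
  · refine h.eval_le_eval hball hx
      (add_smul_signVector_mem_closedBall c s (abs_of_nonneg hδ).le) fun i ↦ ?_
    simp only [Pi.add_apply, Pi.smul_apply, smul_eq_mul]
    linear_combination (abs_le.1 (hcoord i)).2 - δ * signVector_mul_self (R := ℝ) s i

theorem HasPartialSignsOn.exists_root {s : ι → ℤˣ} {c x : ι → ℝ} {δ : ℝ}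
    (h : HasPartialSignsOn P s (Metric.closedBall c δ)) (hx : x ∈ Metric.closedBall c δ)
    (hx0 : eval x P = 0) :
    ∃ t, |t| ≤ δ ∧ (lineRestriction P c (signVector ℝ s)).eval t = 0 := by
  have hδ : 0 ≤ δ := dist_nonneg.trans hx
  obtain ⟨t, ht, ht0⟩ := intermediate_value_Icc (by linarith : -δ ≤ δ)
    (lineRestriction P c (signVector ℝ s)).continuous.continuousOn (hx0 ▸ h.eval_mem_Icc hx)
  exact ⟨t, abs_le.2 ht, ht0⟩

theorem eq_zero_of_eval_eq_zero_on_closedBall {c : ι → ℝ} {δ : ℝ} (hδ : 0 < δ)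
    (h : ∀ x ∈ Metric.closedBall c δ, eval x P = 0) : P = 0 := by
  refine funext_set (fun i ↦ Metric.closedBall (c i) δ)
    (fun i ↦ infinite_of_mem_nhds (c i) (Metric.closedBall_mem_nhds _ hδ)) fun x hx ↦ ?_
  rw [map_zero]
  exact h x (closedBall_pi c hδ.le ▸ hx)

theorem HasPartialSignsOn.lineRestriction_ne_zero {s : ι → ℤˣ} {c : ι → ℝ} {δ : ℝ}
    (h : HasPartialSignsOn P s (Metric.closedBall c δ)) (hδ : 0 < δ) (hP : P ≠ 0) :
    lineRestriction P c (signVector ℝ s) ≠ 0 := by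
  intro hline
  refine hP (eq_zero_of_eval_eq_zero_on_closedBall (c := c) hδ fun x hx ↦ ?_)
  simpa [hline] using h.eval_mem_Icc hx

end SignedPartials

section Grid

variable {ι : Type*}

/-- The centre of the grid cube `∏ᵢ [ε kᵢ, ε (kᵢ + 1)]`. -/
noncomputable def gridCenter (ε : ℝ) (k : ι → ℤ) : ι → ℝ := fun i ↦ ε * (k i + 1 / 2)

theorem gridCenter_add_smul_signVector (ε : ℝ) (k : ι → ℤ) (u : ℤ) (s : ι → ℤˣ) :
    gridCenter ε (k + u • signVector ℤ s) = gridCenter ε k + (ε * u) • signVector ℝ s := by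
  ext i
  simp only [gridCenter, signVector, Pi.add_apply, Pi.smul_apply, smul_eq_mul, Int.cast_add,
    Int.cast_mul, Int.cast_id]
  ring

/-- The projection of the grid along the diagonal direction `s` onto the hyperplane where the
coordinate `i₀` vanishes; its fibres are the diagonals. -/
def diagonalProj (s : ι → ℤˣ) (i₀ : ι) (k : ι → ℤ) : ι → ℤ :=
  k - (signVector ℤ s i₀ * k i₀) • signVector ℤ s

theorem eq_add_smul_of_diagonalProj_eq {s : ι → ℤˣ} {i₀ : ι} {k k' : ι → ℤ}
    (h : diagonalProj s i₀ k = diagonalProj s i₀ k') :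
    k' = k + (signVector ℤ s i₀ * (k' i₀ - k i₀)) • signVector ℤ s := by
  rw [mul_sub, sub_smul, add_sub, add_sub_right_comm]
  exact (sub_add_cancel k' _).symm.trans (congrArg (· + _) h.symm)

theorem diagonalProj_self (s : ι → ℤˣ) (i₀ : ι) (k : ι → ℤ) : diagonalProj s i₀ k i₀ = 0 := by
  simp only [diagonalProj, Pi.sub_apply, Pi.smul_apply, smul_eq_mul]
  linear_combination -k i₀ * signVector_mul_self (R := ℤ) s i₀

variable [Fintype ι]

/-- The grid cube `∏ᵢ [ε kᵢ, ε (kᵢ + 1)]`, written as a ball of the sup norm. -/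
def gridCube (ε : ℝ) (k : ι → ℤ) : Set (ι → ℝ) := Metric.closedBall (gridCenter ε k) (ε / 2)

theorem gridCube_eq_pi_Icc {ε : ℝ} (hε : 0 ≤ ε) (k : ι → ℤ) :
    gridCube ε k = Set.univ.pi fun i ↦ Set.Icc (ε * k i) (ε * (k i + 1)) := by
  rw [gridCube, closedBall_pi _ (by positivity)]
  congr! 2 with i
  rw [gridCenter, Real.closedBall_eq_Icc]
  congr 1 <;> ring

theorem isPreconnected_gridCube (ε : ℝ) (k : ι → ℤ) : IsPreconnected (gridCube ε k) :=
  (convex_closedBall _ _).isPreconnected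

theorem measureReal_gridCube {ε : ℝ} (hε : 0 ≤ ε) (k : ι → ℤ) :
    volume.real (gridCube ε k) = ε ^ Fintype.card ι := by
  rw [measureReal_def, gridCube, Real.volume_pi_closedBall _ (by positivity),
    ENNReal.toReal_ofReal (by positivity), mul_div_cancel₀ _ two_ne_zero]

variable [DecidableEq ι]

/-- The indices `{0, …, n - 1}^ι` of the grid cubes in `[0, nε]^ι`. They are integers rather than
naturals so that they can be translated along diagonals. -/
noncomputable def gridIndices (ι : Type*) [Fintype ι] [DecidableEq ι] (n : ℕ) : Finset (ι → ℤ) :=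
  Fintype.piFinset fun _ ↦ Finset.Ico 0 (n : ℤ)

theorem mem_gridIndices {n : ℕ} {k : ι → ℤ} : k ∈ gridIndices ι n ↔ ∀ i, 0 ≤ k i ∧ k i < n := by
  simp [gridIndices]

theorem diagonalProj_mem_Ico {s : ι → ℤˣ} {n : ℕ} {k : ι → ℤ} (hk : k ∈ gridIndices ι n)
    (i₀ i : ι) : diagonalProj s i₀ k i ∈ Finset.Ico (-n : ℤ) (2 * n) := by
  have hi := mem_gridIndices.1 hk i
  have hi₀ := mem_gridIndices.1 hk i₀
  rw [Finset.mem_Ico]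
  rcases Int.units_eq_one_or (s i) with hs | hs <;>
    rcases Int.units_eq_one_or (s i₀) with hs₀ | hs₀ <;>
    simp only [diagonalProj, signVector, hs, hs₀, Pi.sub_apply, Pi.smul_apply, smul_eq_mul,
      Units.val_one, Units.val_neg, Int.cast_id] <;>
    omega

theorem card_image_diagonalProj_le (s : ι → ℤˣ) (i₀ : ι) (n : ℕ) :
    ((gridIndices ι n).image (diagonalProj s i₀)).card ≤ (3 * n) ^ (Fintype.card ι - 1) := by
  let slab : ι → Finset ℤ := Function.update (fun _ ↦ Finset.Ico (-n : ℤ) (2 * n)) i₀ {0}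
  have hslab : (gridIndices ι n).image (diagonalProj s i₀) ⊆ Fintype.piFinset slab := by
    refine Finset.image_subset_iff.2 fun k hk ↦ Fintype.mem_piFinset.2 fun i ↦ ?_
    obtain rfl | hi := eq_or_ne i i₀
    · simp [slab, diagonalProj_self]
    · simpa only [slab, Function.update_of_ne hi] using diagonalProj_mem_Ico hk i₀ i
  have hlen : (2 * n - -n : ℤ).toNat = 3 * n := by omega
  calc ((gridIndices ι n).image (diagonalProj s i₀)).card
      ≤ (Fintype.piFinset slab).card := Finset.card_le_card hslab
    _ = ∏ i, Function.update (fun _ ↦ 3 * n) i₀ 1 i := by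
      rw [Fintype.card_piFinset]
      refine Finset.prod_congr rfl fun i _ ↦ ?_
      rw [Function.apply_update fun _ ↦ Finset.card]
      simp only [Int.card_Ico, hlen, Finset.card_singleton]
    _ = (3 * n) ^ (Fintype.card ι - 1) := by
      rw [Finset.prod_update_of_mem (Finset.mem_univ i₀), one_mul, Finset.prod_const,
        Finset.card_sdiff_of_subset (Finset.subset_univ _), Finset.card_singleton,
        Finset.card_univ]

theorem card_le_of_card_diagonal_le [Nonempty ι] {n M : ℕ} (s : ι → ℤˣ) {A : Finset (ι → ℤ)}
    (hA : A ⊆ gridIndices ι n)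
    (hM : ∀ k ∈ A, ∀ U : Finset ℤ, (∀ u ∈ U, k + u • signVector ℤ s ∈ A) → U.card ≤ M) :
    A.card ≤ M * (3 * n) ^ (Fintype.card ι - 1) := by
  obtain ⟨i₀⟩ := ‹Nonempty ι›
  have hfiber : ∀ b ∈ A.image (diagonalProj s i₀),
      (A.filter (diagonalProj s i₀ · = b)).card ≤ M := by
    intro b hb
    obtain ⟨k, hk, rfl⟩ := Finset.mem_image.1 hb
    let shift (k' : ι → ℤ) : ℤ := signVector ℤ s i₀ * (k' i₀ - k i₀)
    have hshift : ∀ k' ∈ A.filter (diagonalProj s i₀ · = diagonalProj s i₀ k),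
        k' = k + shift k' • signVector ℤ s :=
      fun k' hk' ↦ eq_add_smul_of_diagonalProj_eq (Finset.mem_filter.1 hk').2.symm
    have hinj : Set.InjOn shift (A.filter (diagonalProj s i₀ · = diagonalProj s i₀ k)) := by
      intro k₁ h₁ k₂ h₂ h
      rw [hshift k₁ h₁, hshift k₂ h₂, h]
    rw [← Finset.card_image_of_injOn hinj]
    refine hM k hk _ fun u hu ↦ ?_
    obtain ⟨k', hk', rfl⟩ := Finset.mem_image.1 hu
    exact hshift k' hk' ▸ (Finset.mem_filter.1 hk').1
  exact (Finset.card_le_mul_card_image A M hfiber).trans <| Nat.mul_le_mul_left M <|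
    (Finset.card_le_card (Finset.image_subset_image hA)).trans (card_image_diagonalProj_le s i₀ n)

end Grid

section ZeroCubes

variable {ι : Type*} [Fintype ι] [DecidableEq ι]

open Classical in
/-- The indices of the grid cubes of side `ε` in `[0, nε]^ι` that meet the zero set of `P`. -/
noncomputable def zeroCubes (P : MvPolynomial ι ℝ) (ε : ℝ) (n : ℕ) : Finset (ι → ℤ) :=
  {k ∈ gridIndices ι n | ∃ x ∈ gridCube ε k, eval x P = 0}

open Classical in
/-- The indices in `zeroCubes P ε n` of cubes on which the partial derivatives of `P` have signs
`s`. -/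
noncomputable def signedZeroCubes (P : MvPolynomial ι ℝ) (s : ι → ℤˣ) (ε : ℝ) (n : ℕ) :
    Finset (ι → ℤ) :=
  {k ∈ zeroCubes P ε n | HasPartialSignsOn P s (gridCube ε k)}

theorem mem_zeroCubes {P : MvPolynomial ι ℝ} {ε : ℝ} {n : ℕ} {k : ι → ℤ} :
    k ∈ zeroCubes P ε n ↔ k ∈ gridIndices ι n ∧ ∃ x ∈ gridCube ε k, eval x P = 0 := by
  simp [zeroCubes]

theorem mem_signedZeroCubes {P : MvPolynomial ι ℝ} {s : ι → ℤˣ} {ε : ℝ} {n : ℕ} {k : ι → ℤ} :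
    k ∈ signedZeroCubes P s ε n ↔ k ∈ zeroCubes P ε n ∧ HasPartialSignsOn P s (gridCube ε k) := by
  simp [signedZeroCubes]

theorem card_signedZeroCubes_le [Nonempty ι] {P : MvPolynomial ι ℝ} (hP : P ≠ 0) (s : ι → ℤˣ)
    {ε : ℝ} (hε : 0 < ε) (n : ℕ) :
    (signedZeroCubes P s ε n).card ≤ 2 * P.totalDegree * (3 * n) ^ (Fintype.card ι - 1) := by
  refine card_le_of_card_diagonal_le s
    (fun k hk ↦ (mem_zeroCubes.1 (mem_signedZeroCubes.1 hk).1).1) fun k hk U hU ↦ ?_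
  set Q := lineRestriction P (gridCenter ε k) (signVector ℝ s)
  have hQ : Q ≠ 0 := (mem_signedZeroCubes.1 hk).2.lineRestriction_ne_zero (half_pos hε) hP
  have hroots : ∀ u ∈ U, ∃ t, |t - ε * u| ≤ ε / 2 ∧ Q.eval t = 0 := by
    intro u hu
    obtain ⟨hzero, hsigns⟩ := mem_signedZeroCubes.1 (hU u hu)
    obtain ⟨-, x, hx, hx0⟩ := mem_zeroCubes.1 hzero
    obtain ⟨t, ht, ht0⟩ := hsigns.exists_root hx hx0
    refine ⟨ε * u + t, by rwa [add_sub_cancel_left], ?_⟩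
    rwa [eval_lineRestriction, gridCenter_add_smul_signVector, add_assoc, ← add_smul,
      ← eval_lineRestriction] at ht0
  exact (card_le_two_mul_natDegree_of_roots_near hQ hε U hroots).trans
    (Nat.mul_le_mul_left 2 (natDegree_lineRestriction_le P _ _))

open Classical in
theorem zeroCubes_subset_union (P : MvPolynomial ι ℝ) (ε : ℝ) (n : ℕ) :
    zeroCubes P ε n ⊆
      (Finset.univ.filter (pderiv · P ≠ 0)).biUnion (fun i ↦ zeroCubes (pderiv i P) ε n) ∪
        Finset.univ.biUnion fun s ↦ signedZeroCubes P s ε n := by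
  intro k hk
  rw [Finset.mem_union]
  by_cases h : ∃ i, pderiv i P ≠ 0 ∧ k ∈ zeroCubes (pderiv i P) ε n
  · left
    simpa using h
  · right
    push Not at h
    obtain ⟨s, hs⟩ := exists_hasPartialSignsOn (P := P) (isPreconnected_gridCube ε k)
      fun i hi z hz hz0 ↦ h i hi (mem_zeroCubes.2 ⟨(mem_zeroCubes.1 hk).1, z, hz, hz0⟩)
    exact Finset.mem_biUnion.2 ⟨s, Finset.mem_univ s, mem_signedZeroCubes.2 ⟨hk, hs⟩⟩

theorem exists_card_zeroCubes_le (ι : Type*) [Fintype ι] [DecidableEq ι] [Nonempty ι] (d : ℕ) :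
    ∃ C : ℕ, ∀ P : MvPolynomial ι ℝ, P ≠ 0 → P.totalDegree ≤ d → ∀ ε : ℝ, 0 < ε → ∀ n : ℕ,
      (zeroCubes P ε n).card ≤ C * n ^ (Fintype.card ι - 1) := by
  classical
  induction d with
  | zero =>
    refine ⟨0, fun P hP hdeg ε _ n ↦ ?_⟩
    obtain ⟨a, rfl⟩ : ∃ a, P = C a := ⟨_, totalDegree_eq_zero_iff_eq_C.1 (Nat.le_zero.1 hdeg)⟩
    simp_all [zeroCubes]
  | succ d ih =>
    obtain ⟨C, hC⟩ := ih
    set N := Fintype.card ι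
    refine ⟨N * C + 2 ^ N * (2 * (d + 1) * 3 ^ (N - 1)), fun P hP hdeg ε hε n ↦ ?_⟩
    have hpartial : ((Finset.univ.filter (pderiv · P ≠ 0)).biUnion
        fun i ↦ zeroCubes (pderiv i P) ε n).card ≤ N * (C * n ^ (N - 1)) := by
      refine (Finset.card_biUnion_le_card_mul _ _ _ fun i hi ↦ ?_).trans
        (Nat.mul_le_mul_right _ (Finset.card_le_univ _))
      exact hC _ (Finset.mem_filter.1 hi).2
        ((totalDegree_pderiv_le i P).trans (Nat.sub_le_of_le_add hdeg)) ε hε n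
    have hsigned : (Finset.univ.biUnion fun s : ι → ℤˣ ↦ signedZeroCubes P s ε n).card
        ≤ 2 ^ N * (2 * (d + 1) * (3 * n) ^ (N - 1)) := by
      refine (Finset.card_biUnion_le_card_mul _ _ (2 * (d + 1) * (3 * n) ^ (N - 1))
        fun s _ ↦ ?_).trans_eq (by simp [N])
      exact (card_signedZeroCubes_le hP s hε n).trans (by gcongr)
    calc (zeroCubes P ε n).card
        ≤ N * (C * n ^ (N - 1)) + 2 ^ N * (2 * (d + 1) * (3 * n) ^ (N - 1)) :=
          (Finset.card_le_card (zeroCubes_subset_union P ε n)).trans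
            ((Finset.card_union_le _ _).trans (add_le_add hpartial hsigned))
      _ = _ := by rw [mul_pow]; ring

end ZeroCubes

section Frontier

theorem inter_frontier_nonempty_of_isPreconnected {X : Type*} [TopologicalSpace X] {S D : Set X}
    (hS : IsPreconnected S) (hD : (S ∩ D).Nonempty) (hDc : (S \ D).Nonempty) :
    (S ∩ frontier D).Nonempty := by
  by_contra hempty
  have hcover : S ⊆ interior D ∪ (closure D)ᶜ := by
    intro x hx
    by_contra hxD
    rw [Set.mem_union, not_or, Set.notMem_compl_iff] at hxD
    exact hempty ⟨x, hx, hxD.2, hxD.1⟩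
  have hinterior : (S ∩ interior D).Nonempty := by
    obtain ⟨x, hxS, hxD⟩ := hD
    exact ⟨x, hxS, (hcover hxS).resolve_right (not_not_intro (subset_closure hxD))⟩
  have hexterior : (S ∩ (closure D)ᶜ).Nonempty := by
    obtain ⟨x, hxS, hxD⟩ := hDc
    exact ⟨x, hxS, (hcover hxS).resolve_left fun h ↦ hxD (interior_subset h)⟩
  obtain ⟨x, -, hx_interior, hx_exterior⟩ :=
    hS _ _ isOpen_interior isClosed_closure.isOpen_compl hcover hinterior hexterior
  exact hx_exterior (interior_subset_closure hx_interior)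

theorem frontier_setOf_forall_pos_subset {X ι : Type*} [TopologicalSpace X] [Finite ι]
    {f : ι → X → ℝ} (hf : ∀ i, Continuous (f i)) :
    frontier {x | ∀ i, 0 < f i x} ⊆ {x | ∃ i, f i x = 0} := by
  have hopen : IsOpen {x | ∀ i, 0 < f i x} := by
    simp only [Set.ofPred_forall]
    exact isOpen_iInter_of_finite fun i ↦ isOpen_lt continuous_const (hf i)
  rw [hopen.frontier_eq]
  rintro x ⟨hx_closure, hx⟩
  obtain ⟨i, hi⟩ : ∃ i, f i x ≤ 0 := by simpa using hx
  have hx_nonneg : 0 ≤ f i x :=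
    closure_minimal (fun y hy ↦ (hy i).le) (isClosed_le continuous_const (hf i)) hx_closure
  exact ⟨i, hi.antisymm hx_nonneg⟩

theorem exists_ne_zero_frontier_subset {R σ ι : Type*} [CommSemiring R] [Algebra R ℝ]
    [Finite ι] (G : ι → MvPolynomial σ R) :
    ∃ P : MvPolynomial σ ℝ, P ≠ 0 ∧
      frontier {x : σ → ℝ | ∀ i, 0 < aeval x (G i)} ⊆ {x | eval x P = 0} := by
  cases nonempty_fintype ι
  have heval (i : ι) (x : σ → ℝ) : eval x (map (algebraMap R ℝ) (G i)) = aeval x (G i) := by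
    rw [eval_map, aeval_def]
  simp only [← heval]
  obtain hempty | ⟨x, hx⟩ :=
    {x : σ → ℝ | ∀ i, 0 < eval x (map (algebraMap R ℝ) (G i))}.eq_empty_or_nonempty
  · exact ⟨1, one_ne_zero, by rw [hempty, frontier_empty]; exact Set.empty_subset _⟩
  refine ⟨∏ i, map (algebraMap R ℝ) (G i), Finset.prod_ne_zero_iff.2 fun i _ h ↦ ?_, ?_⟩
  · simpa [h] using hx i
  · refine (frontier_setOf_forall_pos_subset fun i ↦ continuous_eval _).trans fun x ⟨i, hi⟩ ↦ ?_
    exact (eval_prod _ _ x).trans (Finset.prod_eq_zero (Finset.mem_univ i) hi)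

end Frontier

section RiemannUnion

theorem volume_ne_top_of_subset_pi_Icc {ι : Type*} [Fintype ι] {a b : ι → ℝ} {S : Set (ι → ℝ)}
    (hS : S ⊆ Set.univ.pi fun i ↦ Set.Icc (a i) (b i)) : volume S ≠ ⊤ :=
  measure_ne_top_of_subset hS (isCompact_univ_pi fun _ ↦ isCompact_Icc).measure_lt_top.ne

theorem smallCube_eq_gridCube (ℓ : ℕ) {r : ℚ} (hr : 0 ≤ r) (n : ℕ) (k : Fin ℓ → ℕ) :
    smallCube ℓ r n k = gridCube ((r : ℝ) / n) fun i ↦ (k i : ℤ) := by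
  rw [gridCube_eq_pi_Icc (by positivity), smallCube]
  congr! 3 with i <;> push_cast <;> ring

theorem riemannUnion_subset (ℓ : ℕ) (r : ℚ) (D : Set (Fin ℓ → ℝ)) (n : ℕ) :
    riemannUnion ℓ r D n ⊆ D :=
  Set.iUnion₂_subset fun _ hk ↦ hk.2

theorem riemannUnion_zero_dim (r : ℚ) (D : Set (Fin 0 → ℝ)) (n : ℕ) :
    riemannUnion 0 r D n = D := by
  refine (riemannUnion_subset 0 r D n).antisymm fun x hx ↦ ?_
  refine Set.mem_biUnion (x := finZeroElim) ⟨finZeroElim, fun y _ ↦ ?_⟩ finZeroElim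
  rwa [Subsingleton.elim y x]

theorem exists_lt_mem_Icc_mul {ε x : ℝ} (hε : 0 < ε) {n : ℕ} (hn : 0 < n)
    (hx : x ∈ Set.Icc 0 (ε * n)) :
    ∃ k < n, x ∈ Set.Icc (ε * k) (ε * (k + 1)) := by
  have hceil : ⌈x / ε⌉₊ ≤ n := Nat.ceil_le.2 ((div_le_iff₀' hε).2 hx.2)
  -- The truncated subtraction sends the endpoint `x = 0` to `k = 0`.
  refine ⟨⌈x / ε⌉₊ - 1, by omega, ?_, ?_⟩
  · rw [← le_div_iff₀' hε]
    obtain h | h := Nat.eq_zero_or_pos (⌈x / ε⌉₊ - 1)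
    · simpa [h] using div_nonneg hx.1 hε.le
    · exact (Nat.lt_ceil.1 (by omega)).le
  · rw [← div_le_iff₀' hε]
    exact (Nat.le_ceil _).trans (by exact_mod_cast le_tsub_add)

theorem exists_smallCube_mem (ℓ : ℕ) {r : ℚ} (hr : 0 < r) {n : ℕ} (hn : 0 < n) {x : Fin ℓ → ℝ}
    (hx : x ∈ Set.univ.pi fun _ ↦ Set.Icc (0 : ℝ) r) :
    ∃ k : Fin ℓ → ℕ, (∀ i, k i < n) ∧ x ∈ smallCube ℓ r n k := by
  have hε : (0 : ℝ) < r / n := by positivity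
  have hεn : (r : ℝ) / n * n = r := by field_simp
  choose k hkn hkx using fun i ↦ exists_lt_mem_Icc_mul hε hn (hεn.symm ▸ hx i trivial)
  refine ⟨k, hkn, ?_⟩
  rw [smallCube_eq_gridCube ℓ hr.le, gridCube_eq_pi_Icc hε.le]
  exact fun i _ ↦ hkx i

variable {ℓ : ℕ} {r : ℚ} {P : MvPolynomial (Fin ℓ) ℝ} {D : Set (Fin ℓ → ℝ)}

theorem subset_riemannUnion_union_zeroCubes (hr : 0 < r)
    (hD : frontier D ⊆ {x | eval x P = 0})
    (hsub : D ⊆ Set.univ.pi fun _ ↦ Set.Icc (0 : ℝ) r) {n : ℕ} (hn : 0 < n) :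
    D ⊆ riemannUnion ℓ r D n ∪ ⋃ k ∈ zeroCubes P ((r : ℝ) / n) n, gridCube ((r : ℝ) / n) k := by
  intro x hx
  obtain ⟨k, hkn, hxk⟩ := exists_smallCube_mem ℓ hr hn (hsub hx)
  by_cases hkD : smallCube ℓ r n k ⊆ D
  · exact Or.inl (Set.mem_biUnion ⟨hkn, hkD⟩ hxk)
  rw [smallCube_eq_gridCube ℓ hr.le] at hxk hkD
  obtain ⟨z, hzk, hzD⟩ := inter_frontier_nonempty_of_isPreconnected (isPreconnected_gridCube _ _)
    ⟨x, hxk, hx⟩ (Set.sdiff_nonempty.2 hkD)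
  have hk : (fun i ↦ (k i : ℤ)) ∈ gridIndices (Fin ℓ) n :=
    mem_gridIndices.2 fun i ↦ ⟨Int.natCast_nonneg _, Int.ofNat_lt.2 (hkn i)⟩
  exact Or.inr (Set.mem_biUnion (mem_zeroCubes.2 ⟨hk, z, hzk, hD hzD⟩) hxk)

theorem measureReal_le_riemannUnion_add (hr : 0 < r)
    (hD : frontier D ⊆ {x | eval x P = 0})
    (hsub : D ⊆ Set.univ.pi fun _ ↦ Set.Icc (0 : ℝ) r) {n : ℕ} (hn : 0 < n) :
    volume.real D ≤ volume.real (riemannUnion ℓ r D n)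
      + (zeroCubes P ((r : ℝ) / n) n).card * ((r : ℝ) / n) ^ ℓ := by
  set ε : ℝ := r / n
  have hε : 0 ≤ ε := by positivity
  have hV : volume (riemannUnion ℓ r D n) ≠ ⊤ :=
    volume_ne_top_of_subset_pi_Icc ((riemannUnion_subset ℓ r D n).trans hsub)
  have hcubes : volume (⋃ k ∈ zeroCubes P ε n, gridCube ε k) ≠ ⊤ :=
    ((measure_biUnion_lt_top (Finset.finite_toSet _)) fun k _ ↦ measure_closedBall_lt_top).ne
  calc volume.real D
      ≤ volume.real (riemannUnion ℓ r D n ∪ ⋃ k ∈ zeroCubes P ε n, gridCube ε k) :=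
        measureReal_mono (subset_riemannUnion_union_zeroCubes hr hD hsub hn)
          (measure_union_ne_top hV hcubes)
    _ ≤ volume.real (riemannUnion ℓ r D n) + ∑ k ∈ zeroCubes P ε n, volume.real (gridCube ε k) :=
        (measureReal_union_le _ _).trans (by gcongr; exact measureReal_biUnion_finset_le _ _)
    _ = _ := by simp [measureReal_gridCube hε]

theorem exists_abs_measureReal_sub_riemannUnion_le (hℓ : 0 < ℓ) (hr : 0 < r) (hP : P ≠ 0)
    (hD : frontier D ⊆ {x | eval x P = 0})
    (hsub : D ⊆ Set.univ.pi fun _ ↦ Set.Icc (0 : ℝ) r) :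
    ∃ K : ℝ, 0 ≤ K ∧ ∀ n : ℕ, 0 < n →
      |volume.real D - volume.real (riemannUnion ℓ r D n)| ≤ K / n := by
  have : Nonempty (Fin ℓ) := Fin.pos_iff_nonempty.1 hℓ
  obtain ⟨C, hC⟩ := exists_card_zeroCubes_le (Fin ℓ) P.totalDegree
  refine ⟨C * r ^ ℓ, by positivity, fun n hn ↦ ?_⟩
  have hV : volume.real (riemannUnion ℓ r D n) ≤ volume.real D :=
    measureReal_mono (riemannUnion_subset ℓ r D n) (volume_ne_top_of_subset_pi_Icc hsub)
  rw [abs_of_nonneg (sub_nonneg.2 hV), sub_le_iff_le_add']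
  have hcard : ((zeroCubes P ((r : ℝ) / n) n).card : ℝ) ≤ C * n ^ (ℓ - 1) := by
    exact_mod_cast Fintype.card_fin ℓ ▸ hC P hP le_rfl _ (by positivity) n
  calc volume.real D
      ≤ volume.real (riemannUnion ℓ r D n)
          + (zeroCubes P ((r : ℝ) / n) n).card * ((r : ℝ) / n) ^ ℓ :=
        measureReal_le_riemannUnion_add hr hD hsub hn
    _ ≤ volume.real (riemannUnion ℓ r D n) + C * n ^ (ℓ - 1) * ((r : ℝ) / n) ^ ℓ := by gcongr
    _ = volume.real (riemannUnion ℓ r D n) + C * r ^ ℓ / n := by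
      rw [div_pow, ← mul_pow_sub_one hℓ.ne' (n : ℝ)]
      field_simp

end RiemannUnion

theorem riemannUnion_volume_convergence_general
    (ℓ : ℕ) (r : ℚ) (hr : 0 < r) (P : MvPolynomial (Fin ℓ) ℝ) (hP : P ≠ 0)
    (D : Set (Fin ℓ → ℝ)) (hD : frontier D ⊆ {x | eval x P = 0})
    (hsub : D ⊆ Set.univ.pi fun _ ↦ Set.Icc (0 : ℝ) (r : ℝ)) :
    ∃ L : ℝ, 0 < L ∧
      ∀ k n : ℕ, 1 ≤ k →
        4 * (r : ℝ) * L * Real.sqrt ℓ * k < n →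
        |(volume D).toReal - (volume (riemannUnion ℓ r D n)).toReal| < 1 / k := by
  obtain rfl | hℓ := Nat.eq_zero_or_pos ℓ
  · refine ⟨1, one_pos, fun k n hk _ ↦ ?_⟩
    rw [riemannUnion_zero_dim, sub_self, abs_zero]
    positivity
  obtain ⟨K, hK, hrate⟩ := exists_abs_measureReal_sub_riemannUnion_le hℓ hr hP hD hsub
  refine ⟨(K + 1) / (4 * r), by positivity, fun k n hk hkn ↦ ?_⟩
  have hsqrt : 1 ≤ Real.sqrt ℓ := Real.one_le_sqrt.2 (Nat.one_le_cast.2 hℓ)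
  have hkn' : K * k < n :=
    calc K * k ≤ (K + 1) * Real.sqrt ℓ * k := by gcongr; nlinarith
      _ = 4 * r * ((K + 1) / (4 * r)) * Real.sqrt ℓ * k := by field_simp
      _ < n := hkn
  have hn : (0 : ℝ) < n := (by positivity : 0 ≤ K * k).trans_lt hkn'
  calc |volume.real D - volume.real (riemannUnion ℓ r D n)|
      ≤ K / n := hrate n (Nat.cast_pos.1 hn)
    _ < 1 / k := by
      rw [div_lt_div_iff₀ hn (by positivity), one_mul]
      exact hkn'

/-- For a bounded basic open semialgebraic set `D ⊆ [0,r]^ℓ`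
defined by integer-coefficient polynomials, there is a constant `L > 0`
(depending only on `D`) such that whenever `4·r·L·√ℓ·k < n` (with `k, n ≥ 1`),
`|vol(D) − vol(V_n)| < 1/k`. -/
theorem riemannUnion_volume_convergence
    (ℓ q : ℕ) (r : ℚ) (hr : 0 < r)
    (G : Fin q → MvPolynomial (Fin ℓ) ℤ)
    (D : Set (Fin ℓ → ℝ))
    (hD : D = {x : Fin ℓ → ℝ | ∀ i, 0 < MvPolynomial.aeval x (G i)})
    (hsub : D ⊆ Set.univ.pi fun _ => Set.Icc (0 : ℝ) (r : ℝ)) :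
    ∃ L : ℝ, 0 < L ∧
      ∀ k n : ℕ, 1 ≤ k → 1 ≤ n →
        4 * (r : ℝ) * L * Real.sqrt ℓ * k < n →
        |(MeasureTheory.volume D).toReal
          - (MeasureTheory.volume (riemannUnion ℓ r D n)).toReal| < 1 / k := by
  obtain ⟨P, hP, hfrontier⟩ := exists_ne_zero_frontier_subset G
  obtain ⟨L, hL, h⟩ :=
    riemannUnion_volume_convergence_general ℓ r hr P hP D (hD ▸ hfrontier) hsub
  exact ⟨L, hL, fun k n hk _ ↦ h k n hk⟩
end
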